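/- arXiv:1510.00329 — 3 statements merged into one kernel-verified Lean document; each statement's English description precedes it below -/
import Mathlib

section
/- Let q, q̃ : [0,1] → ℂ be continuous, let h, h̃ ∈ ℂ, and fix δ ∈ (0, π/2). Let φ(·,λ), S(·,λ) be the solutions of −y″ + q y = λ y on [0,1] with φ(0,λ) = 1, φ′(0,λ) = −h and S(0,λ) = 0, S′(0,λ) = 1, and let φ̃(·,λ), S̃(·,λ) be the analogous solutions for q̃, h̃. Let M : ℂ → ℂ be an arbitrary function and set ψ(x,λ) := S(x,λ) + M(λ)φ(x,λ) and ψ̃(x,λ) := S̃(x,λ) + M(λ)φ̃(x,λ). Assume that for every x ∈ (0,1] there exist constants C > 0 and R > 0 such that for all ρ ∈ Λ_δ with |ρ| ≥ R one has |iρ e^{−iρx} ψ(x,ρ²) − 1| ≤ C/|ρ| and |e^{−iρx} ∂ψ/∂x(x,ρ²) − 1| ≤ C/|ρ|, and the same two bounds hold with ψ replaced by ψ̃. Then q(x) = q̃(x) for all x ∈ [0,1] and h = h̃. -/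
open MeasureTheory Set Complex

/-- `y` (with derivative `y'`) is a solution of `-y'' + q y = λ y` on the set `s`
(containing the basepoint `0`): `y`, `y'` are absolutely continuous on `s` and
`y'' = (q - λ) y` almost everywhere, encoded via integral representations. -/
def SLSol (q : ℝ → ℂ) (lam : ℂ) (y y' : ℝ → ℂ) (s : Set ℝ) : Prop :=
  (∀ x ∈ s, IntervalIntegrable y' volume 0 x) ∧
  (∀ x ∈ s, IntervalIntegrable (fun t => (q t - lam) * y t) volume 0 x) ∧
  (∀ x ∈ s, y x = y 0 + ∫ t in (0:ℝ)..x, y' t) ∧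
  (∀ x ∈ s, y' x = y' 0 + ∫ t in (0:ℝ)..x, (q t - lam) * y t)

/-!
Write `λ = ρ²`. Since `ψ = S + M φ` and `ψ̃ = S̃ + M φ̃` share the coefficient `M`, at a fixed
`x` the function `g(λ) = S φ̃ - φ S̃` equals `ψ φ̃ - φ ψ̃`. It is entire in `λ` of order at most
`1/2`, and in the sector `Λ_δ` it tends to `0`, because `e^{-iρx} ψ` and `e^{-iρx} ψ̃` do while
`e^{iρx} φ` and `e^{iρx} φ̃` stay bounded. By Phragmén–Lindelöf `g` is bounded on the whole plane,
so `g = 0` by Liouville's theorem. Hence `S / φ = S̃ / φ̃`; differentiating and using that the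
Wronskian of `φ` and `S` is `1` gives `φ² = φ̃²` and, by symmetry, `S² = S̃²`. Differentiating
these identities once yields `h = h̃`, and twice `q = q̃`.
-/

section

open Filter Topology Bornology Asymptotics

theorem le_mul_exp_of_hasDerivWithinAt_le {f f' : ℝ → ℝ} {K a b : ℝ}
    (hf : ∀ x ∈ Icc a b, HasDerivWithinAt f (f' x) (Icc a b) x)
    (hle : ∀ x ∈ Icc a b, f' x ≤ K * f x) {x : ℝ} (hx : x ∈ Icc a b) :
    f x ≤ f a * Real.exp (K * (x - a)) := by
  rw [← gronwallBound_ε0]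
  refine le_gronwallBound_of_liminf_deriv_right_le (f' := f')
    (fun t ht => (hf t ht).continuousWithinAt) (fun t ht r hr => ?_) le_rfl
    (fun t ht => by simpa using hle t (Ico_subset_Icc_self ht)) x hx
  have hright : HasDerivWithinAt f (f' t) (Ici t) t :=
    (hf t (Ico_subset_Icc_self ht)).mono_of_mem_nhdsWithin (Icc_mem_nhdsGE_of_mem ht)
  simpa only [slope_def_field, div_eq_inv_mul] using hright.liminf_right_slope_le hr

theorem hasDerivWithinAt_Icc_of_eq_add_integral {y f : ℝ → ℂ} {c : ℂ} {b : ℝ}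
    (hf : ContinuousOn f (Icc 0 b)) (hy : ∀ x ∈ Icc 0 b, y x = c + ∫ t in (0 : ℝ)..x, f t)
    {x : ℝ} (hx : x ∈ Icc 0 b) : HasDerivWithinAt y (f x) (Icc 0 b) x := by
  have : Fact (x ∈ Icc 0 b) := ⟨hx⟩
  have hint : IntervalIntegrable f volume 0 x :=
    (hf.mono (Icc_subset_Icc_right hx.2)).intervalIntegrable_of_Icc hx.1
  have hmeas : StronglyMeasurableAtFilter f (𝓝[Icc 0 b] x) :=
    hf.stronglyMeasurableAtFilter_nhdsWithin measurableSet_Icc x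
  exact ((intervalIntegral.integral_hasDerivWithinAt_right hint hmeas (hf x hx)).const_add
    c).congr hy (hy x hx)

theorem continuousOn_of_eq_add_integral {y f : ℝ → ℂ} {c : ℂ} {b : ℝ} (hb : 0 ≤ b)
    (hf : IntervalIntegrable f volume 0 b)
    (hy : ∀ x ∈ Icc 0 b, y x = c + ∫ t in (0 : ℝ)..x, f t) : ContinuousOn y (Icc 0 b) := by
  have hprim := intervalIntegral.continuousOn_primitive_interval' hf left_mem_uIcc
  rw [uIcc_of_le hb] at hprim
  exact (continuousOn_const.add hprim).congr hy

/-- A classical solution of `-y'' + q y = λ y` on `[0, b]`: `y` and `y'` are differentiable up to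
the endpoints. For a continuous potential every solution in the sense of `SLSol` is of this kind. -/
structure IsClassicalSolution (q : ℝ → ℂ) (lam : ℂ) (b : ℝ) (y y' : ℝ → ℂ) : Prop where
  hasDerivWithinAt : ∀ x ∈ Icc 0 b, HasDerivWithinAt y (y' x) (Icc 0 b) x
  hasDerivWithinAt' : ∀ x ∈ Icc 0 b, HasDerivWithinAt y' ((q x - lam) * y x) (Icc 0 b) x

/-- A classical solution of `-y'' + q y = λ y` on `[0, b]` with Cauchy data
`y 0 = α`, `y' 0 = β`. -/
structure SolvesIVP (q : ℝ → ℂ) (lam : ℂ) (b : ℝ) (α β : ℂ) (y y' : ℝ → ℂ) : Prop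
    extends IsClassicalSolution q lam b y y' where
  apply_zero : y 0 = α
  deriv_zero : y' 0 = β

theorem SLSol.isClassicalSolution {q y y' : ℝ → ℂ} {lam : ℂ} {b : ℝ} (hb : 0 ≤ b)
    (hq : ContinuousOn q (Icc 0 b)) (h : SLSol q lam y y' (Icc 0 b)) :
    IsClassicalSolution q lam b y y' := by
  obtain ⟨hint, hint', heq, heq'⟩ := h
  have hbmem : b ∈ Icc 0 b := right_mem_Icc.2 hb
  have hy : ContinuousOn y (Icc 0 b) := continuousOn_of_eq_add_integral hb (hint b hbmem) heq
  have hy' : ContinuousOn y' (Icc 0 b) := continuousOn_of_eq_add_integral hb (hint' b hbmem) heq'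
  exact ⟨fun _ => hasDerivWithinAt_Icc_of_eq_add_integral hy' heq, fun _ =>
    hasDerivWithinAt_Icc_of_eq_add_integral ((hq.sub continuousOn_const).mul hy) heq'⟩

theorem SLSol.solvesIVP {q y y' : ℝ → ℂ} {lam α β : ℂ} {b : ℝ} (hb : 0 ≤ b)
    (hq : ContinuousOn q (Icc 0 b)) (h : SLSol q lam y y' (Icc 0 b)) (hα : y 0 = α)
    (hβ : y' 0 = β) : SolvesIVP q lam b α β y y' :=
  ⟨h.isClassicalSolution hb hq, hα, hβ⟩

namespace IsClassicalSolution

variable {q y y' z z' : ℝ → ℂ} {l m : ℂ} {b : ℝ}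

theorem continuousOn (hy : IsClassicalSolution q l b y y') : ContinuousOn y (Icc 0 b) :=
  fun x hx => (hy.hasDerivWithinAt x hx).continuousWithinAt

theorem continuousOn_deriv (hy : IsClassicalSolution q l b y y') : ContinuousOn y' (Icc 0 b) :=
  fun x hx => (hy.hasDerivWithinAt' x hx).continuousWithinAt

theorem add_const (hy : IsClassicalSolution q l b y y') (c : ℂ) :
    IsClassicalSolution (fun t => q t + c) (l + c) b y y' :=
  ⟨hy.hasDerivWithinAt, fun x hx =>
    (hy.hasDerivWithinAt' x hx).congr_deriv (by rw [add_sub_add_right_eq_sub])⟩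

theorem const_mul_sub_const_mul (hy : IsClassicalSolution q l b y y')
    (hz : IsClassicalSolution q l b z z') (c d : ℂ) :
    IsClassicalSolution q l b (fun t => c * y t - d * z t) (fun t => c * y' t - d * z' t) where
  hasDerivWithinAt x hx :=
    ((hy.hasDerivWithinAt x hx).const_mul c).sub ((hz.hasDerivWithinAt x hx).const_mul d)
  hasDerivWithinAt' x hx :=
    (((hy.hasDerivWithinAt' x hx).const_mul c).sub
      ((hz.hasDerivWithinAt' x hx).const_mul d)).congr_deriv (by ring)

theorem wronskian_sub_wronskian_zero (hy : IsClassicalSolution q l b y y')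
    (hz : IsClassicalSolution q m b z z') {x : ℝ} (hx : x ∈ Icc 0 b) :
    (y x * z' x - y' x * z x) - (y 0 * z' 0 - y' 0 * z 0)
      = (l - m) * ∫ t in (0 : ℝ)..x, y t * z t := by
  have hsub : Icc 0 x ⊆ Icc 0 b := Icc_subset_Icc_right hx.2
  have hderiv : ∀ t ∈ Ioo 0 x,
      HasDerivAt (fun t => y t * z' t - y' t * z t) ((l - m) * (y t * z t)) t := by
    intro t ht
    have ht' : t ∈ Icc 0 b := hsub (Ioo_subset_Icc_self ht)
    exact ((((hy.hasDerivWithinAt t ht').mul (hz.hasDerivWithinAt' t ht')).sub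
      ((hy.hasDerivWithinAt' t ht').mul (hz.hasDerivWithinAt t ht'))).congr_deriv
        (by ring)).hasDerivAt (Icc_mem_nhds ht.1 (ht.2.trans_le hx.2))
  rw [← intervalIntegral.integral_const_mul]
  refine (intervalIntegral.integral_eq_sub_of_hasDerivAt_of_le hx.1 ?_ hderiv ?_).symm
  · exact ((hy.continuousOn.mul hz.continuousOn_deriv).sub
      (hy.continuousOn_deriv.mul hz.continuousOn)).mono hsub
  · exact ((continuousOn_const.mul (hy.continuousOn.mul hz.continuousOn)).mono
      hsub).intervalIntegrable_of_Icc hx.1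

theorem wronskian_eq (hy : IsClassicalSolution q l b y y') (hz : IsClassicalSolution q l b z z')
    {x : ℝ} (hx : x ∈ Icc 0 b) : y x * z' x - y' x * z x = y 0 * z' 0 - y' 0 * z 0 := by
  simpa [sub_eq_zero] using hy.wronskian_sub_wronskian_zero hz hx

end IsClassicalSolution

/-- For a solution `y` with `λ = r²`, put `u = e^{irt} y`, `v = e^{irt} y'` and `p = q t`: the
left-hand side is half the derivative of `|v|² + |r|² |u|²`. Since `r² - |r|² = 2i (Im r) r`, the
indefinite cross terms are absorbed by the damping `-Im r (|v|² + |r|² |u|²)`. -/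
theorem inner_add_sq_mul_inner_le {r : ℂ} (hr : 0 ≤ r.im) (p u v : ℂ) :
    inner ℝ v (I * r * v + (p - r ^ 2) * u) + ‖r‖ ^ 2 * inner ℝ u (I * r * u + v)
      ≤ ‖p‖ * ‖u‖ * ‖v‖ := by
  have hdamping : inner ℝ v (I * r * v + (p - r ^ 2) * u) + ‖r‖ ^ 2 * inner ℝ u (I * r * u + v)
      = inner ℝ v (p * u) - r.im * (‖v‖ ^ 2 + ‖r‖ ^ 2 * ‖u‖ ^ 2
        + 2 * inner ℝ v (I * r * u)) := by
    simp only [Complex.inner, Complex.sq_norm, normSq_apply, mul_re, mul_im, add_re, add_im,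
      sub_re, sub_im, conj_re, conj_im, I_re, I_im, pow_two r]
    ring
  have hcross : -(‖v‖ * (‖r‖ * ‖u‖)) ≤ inner ℝ v (I * r * u) := by
    simpa using (abs_le.1 (abs_real_inner_le_norm v (I * r * u))).1
  have hpotential : inner ℝ v (p * u) ≤ ‖v‖ * (‖p‖ * ‖u‖) := by
    simpa using real_inner_le_norm v (p * u)
  have hsquare : 0 ≤ ‖v‖ ^ 2 + ‖r‖ ^ 2 * ‖u‖ ^ 2 + 2 * inner ℝ v (I * r * u) := by
    nlinarith [sq_nonneg (‖v‖ - ‖r‖ * ‖u‖)]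
  rw [hdamping]
  linarith [mul_nonneg hr hsquare]

namespace IsClassicalSolution

variable {q y y' : ℝ → ℂ} {l r : ℂ} {b Q : ℝ}

theorem norm_sq_mul_norm_exp_mul_sq_le (hy : IsClassicalSolution q (r ^ 2) b y y')
    (hQ : ∀ x ∈ Icc 0 b, ‖q x‖ ≤ Q) (hr : 0 ≤ r.im) (hr0 : r ≠ 0) {x : ℝ} (hx : x ∈ Icc 0 b) :
    ‖r‖ ^ 2 * ‖cexp (I * r * x) * y x‖ ^ 2
      ≤ (‖y' 0‖ ^ 2 + ‖r‖ ^ 2 * ‖y 0‖ ^ 2) * Real.exp (Q / ‖r‖ * x) := by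
  set u : ℝ → ℂ := fun t => cexp (I * r * t) * y t with hu
  set v : ℝ → ℂ := fun t => cexp (I * r * t) * y' t with hv
  have hexp : ∀ t : ℝ, HasDerivWithinAt (fun t : ℝ => cexp (I * r * t))
      (cexp (I * r * t) * (I * r * 1)) (Icc 0 b) t := fun t =>
    ((hasDerivAt_id t).ofReal_comp.const_mul (I * r)).cexp.hasDerivWithinAt
  have hu' : ∀ t ∈ Icc 0 b, HasDerivWithinAt u (I * r * u t + v t) (Icc 0 b) t := fun t ht =>
    ((hexp t).mul (hy.hasDerivWithinAt t ht)).congr_deriv (by simp only [hu, hv]; ring)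
  have hv' : ∀ t ∈ Icc 0 b,
      HasDerivWithinAt v (I * r * v t + (q t - r ^ 2) * u t) (Icc 0 b) t := fun t ht =>
    ((hexp t).mul (hy.hasDerivWithinAt' t ht)).congr_deriv (by simp only [hu, hv]; ring)
  have henergy := le_mul_exp_of_hasDerivWithinAt_le (K := Q / ‖r‖)
    (fun t ht => (hv' t ht).norm_sq.add ((hu' t ht).norm_sq.const_mul (‖r‖ ^ 2)))
    (fun t ht => ?_) hx
  · simp only [Pi.add_apply, hu, hv, ofReal_zero, mul_zero, Complex.exp_zero, one_mul,
      sub_zero] at henergy ⊢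
    exact (le_add_of_nonneg_left (sq_nonneg _)).trans henergy
  · calc 2 * inner ℝ (v t) (I * r * v t + (q t - r ^ 2) * u t)
          + ‖r‖ ^ 2 * (2 * inner ℝ (u t) (I * r * u t + v t))
        ≤ 2 * (‖q t‖ * ‖u t‖ * ‖v t‖) := by
          linarith [inner_add_sq_mul_inner_le hr (q t) (u t) (v t)]
      _ ≤ 2 * (Q * ‖u t‖ * ‖v t‖) := by gcongr; exact hQ t ht
      _ = Q / ‖r‖ * (2 * ‖v t‖ * (‖r‖ * ‖u t‖)) := by field_simp
      _ ≤ Q / ‖r‖ * (‖v t‖ ^ 2 + ‖r‖ ^ 2 * ‖u t‖ ^ 2) := by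
          have hQ0 : 0 ≤ Q := (norm_nonneg _).trans (hQ t ht)
          rw [← mul_pow]
          gcongr
          exact two_mul_le_add_sq _ _

/-- Shifting the spectral parameter to `1` turns the weighted estimate into an unweighted one. -/
theorem norm_sq_le (hy : IsClassicalSolution q l b y y') (hQ : ∀ x ∈ Icc 0 b, ‖q x‖ ≤ Q) {x : ℝ}
    (hx : x ∈ Icc 0 b) :
    ‖y x‖ ^ 2 ≤ (‖y' 0‖ ^ 2 + ‖y 0‖ ^ 2) * Real.exp ((Q + (‖l‖ + 1)) * x) := by
  have hshift : IsClassicalSolution (fun t => q t + (1 - l)) (1 ^ 2) b y y' := by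
    simpa using hy.add_const (1 - l)
  have hbound : ∀ t ∈ Icc 0 b, ‖q t + (1 - l)‖ ≤ Q + (‖l‖ + 1) := fun t ht =>
    norm_add_le_of_le (hQ t ht) ((norm_sub_le _ _).trans (by rw [norm_one, add_comm]))
  have hphase : ‖cexp (I * x)‖ = 1 := by rw [mul_comm, norm_exp_ofReal_mul_I]
  simpa [hphase] using hshift.norm_sq_mul_norm_exp_mul_sq_le hbound (by simp) one_ne_zero hx

end IsClassicalSolution

section Entire

variable {q : ℝ → ℂ} {φ φ' S S' y y' : ℂ → ℝ → ℂ} {α β h : ℂ} {b x : ℝ}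

theorem exists_isClassicalSolution_apply_eq_zero {q φ φ' S S' : ℝ → ℂ} {l h : ℂ} {b x : ℝ}
    (hφ : SolvesIVP q l b 1 (-h) φ φ') (hS : SolvesIVP q l b 0 1 S S') (hx : x ∈ Icc 0 b) :
    ∃ k k', IsClassicalSolution q l b k k' ∧ k x = 0 ∧ k' x = 1 := by
  refine ⟨_, _, hS.const_mul_sub_const_mul hφ.toIsClassicalSolution (φ x) (S x), by ring, ?_⟩
  have hW := hφ.wronskian_eq hS.toIsClassicalSolution hx
  rw [hφ.apply_zero, hφ.deriv_zero, hS.apply_zero, hS.deriv_zero] at hW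
  linear_combination hW

theorem SolvesIVP.apply_sub_apply {q y y' z z' k k' : ℝ → ℂ} {l m α β : ℂ} {b x : ℝ}
    (hy : SolvesIVP q l b α β y y') (hz : SolvesIVP q m b α β z z')
    (hk : IsClassicalSolution q l b k k') (hx : x ∈ Icc 0 b) (hkx : k x = 0) (hkx' : k' x = 1) :
    z x - y x = (m - l) * ∫ t in (0 : ℝ)..x, k t * z t := by
  have hkz := hk.wronskian_sub_wronskian_zero hz.toIsClassicalSolution hx
  have hky := hk.wronskian_eq hy.toIsClassicalSolution hx
  rw [hkx, hkx', hz.apply_zero, hz.deriv_zero] at hkz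
  rw [hkx, hkx', hy.apply_zero, hy.deriv_zero] at hky
  linear_combination hky - hkz

theorem SolvesIVP.exists_forall_norm_le (hq : ContinuousOn q (Icc 0 b))
    (hy : ∀ l, SolvesIVP q l b α β (y l) (y' l)) (l : ℂ) :
    ∃ B, ∀ᶠ m in 𝓝 l, ∀ x ∈ Icc 0 b, ‖y m x‖ ≤ B := by
  obtain ⟨Q, hQ⟩ := isCompact_Icc.exists_bound_of_continuousOn hq
  refine ⟨√((‖β‖ ^ 2 + ‖α‖ ^ 2) * Real.exp ((Q + (‖l‖ + 1 + 1)) * b)), ?_⟩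
  filter_upwards [continuous_norm.continuousAt.eventually_lt_const (lt_add_one ‖l‖)] with m hm x hx
  have hQ0 : 0 ≤ Q := (norm_nonneg _).trans (hQ x hx)
  refine Real.le_sqrt_of_sq_le (((hy m).norm_sq_le hQ hx).trans ?_)
  rw [(hy m).apply_zero, (hy m).deriv_zero]
  gcongr
  exacts [hx.1, hx.2]

theorem SolvesIVP.continuousAt (hq : ContinuousOn q (Icc 0 b))
    (hφ : ∀ l, SolvesIVP q l b 1 (-h) (φ l) (φ' l)) (hS : ∀ l, SolvesIVP q l b 0 1 (S l) (S' l))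
    (hy : ∀ l, SolvesIVP q l b α β (y l) (y' l)) (hx : x ∈ Icc 0 b) (l : ℂ) :
    ContinuousAt (fun m => y m x) l := by
  obtain ⟨B, hB⟩ := exists_forall_norm_le hq hy l
  obtain ⟨k, k', hk, hkx, hkx'⟩ := exists_isClassicalSolution_apply_eq_zero (hφ l) (hS l) hx
  obtain ⟨A, hA⟩ := isCompact_Icc.exists_bound_of_continuousOn hk.continuousOn
  have hbound : IsBoundedUnder (· ≤ ·) (𝓝 l) (norm ∘ fun m => ∫ t in (0 : ℝ)..x, k t * y m t) := by
    refine isBoundedUnder_of_eventually_le (a := A * B * |x - 0|) ?_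
    filter_upwards [hB] with m hm
    refine intervalIntegral.norm_integral_le_of_norm_le_const fun t ht => ?_
    rw [uIoc_of_le hx.1] at ht
    have ht' : t ∈ Icc 0 b := ⟨ht.1.le, ht.2.trans hx.2⟩
    exact norm_mul_le_of_le (hA t ht') (hm t ht')
  have hlim : Tendsto (fun m => m - l) (𝓝 l) (𝓝 0) := by
    simpa using (continuous_sub_right l).tendsto l
  refine tendsto_sub_nhds_zero_iff.1 ((hlim.zero_mul_isBoundedUnder_le hbound).congr fun m => ?_)
  exact ((hy l).apply_sub_apply (hy m) hk hx hkx hkx').symm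

theorem SolvesIVP.differentiable (hq : ContinuousOn q (Icc 0 b))
    (hφ : ∀ l, SolvesIVP q l b 1 (-h) (φ l) (φ' l)) (hS : ∀ l, SolvesIVP q l b 0 1 (S l) (S' l))
    (hy : ∀ l, SolvesIVP q l b α β (y l) (y' l)) (hx : x ∈ Icc 0 b) :
    Differentiable ℂ fun l => y l x := by
  intro l
  obtain ⟨B, hB⟩ := exists_forall_norm_le hq hy l
  obtain ⟨k, k', hk, hkx, hkx'⟩ := exists_isClassicalSolution_apply_eq_zero (hφ l) (hS l) hx
  obtain ⟨A, hA⟩ := isCompact_Icc.exists_bound_of_continuousOn hk.continuousOn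
  have hsub : uIoc 0 x ⊆ Icc 0 b := by
    rw [uIoc_of_le hx.1]
    exact Ioc_subset_Icc_self.trans (Icc_subset_Icc_right hx.2)
  have hint : ContinuousAt (fun m => ∫ t in (0 : ℝ)..x, k t * y m t) l := by
    refine intervalIntegral.continuousAt_of_dominated_interval (bound := fun _ => A * B)
      (.of_forall fun m => ?_) ?_ intervalIntegrable_const (.of_forall fun t ht => ?_)
    · exact ((hk.continuousOn.mul (hy m).continuousOn).mono hsub).aestronglyMeasurable
        measurableSet_uIoc
    · filter_upwards [hB] with m hm
      exact .of_forall fun t ht => norm_mul_le_of_le (hA t (hsub ht)) (hm t (hsub ht))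
    · exact continuousAt_const.mul (continuousAt hq hφ hS hy (hsub ht) l)
  refine (hasDerivAt_iff_tendsto_slope.2
    ((hint.tendsto.mono_left nhdsWithin_le_nhds).congr' ?_)).differentiableAt
  filter_upwards [self_mem_nhdsWithin] with m hm
  rw [slope_def_field, (hy l).apply_sub_apply (hy m) hk hx hkx hkx',
    mul_div_cancel_left₀ _ (sub_ne_zero.2 hm)]

end Entire

theorem arg_exp_eq_im {w : ℂ} (hw : w.im ∈ Ioc (-Real.pi) Real.pi) : (cexp w).arg = w.im := by
  rw [← log_im, log_exp hw.1 hw.2]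

/-- The closed sector `Λ_δ = {ρ : δ ≤ arg ρ ≤ π - δ}`. For `0 < δ` it omits the origin,
since `arg 0 = 0`. -/
def closedSector (δ : ℝ) : Set ℂ := {r | r.arg ∈ Icc δ (Real.pi - δ)}

theorem im_nonneg_of_mem_closedSector {δ : ℝ} (hδ : 0 ≤ δ) {r : ℂ} (hr : r ∈ closedSector δ) :
    0 ≤ r.im :=
  arg_nonneg_iff.1 (hδ.trans hr.1)

theorem exists_sq_eq_mem_closedSector (z : ℂ) :
    ∃ r : ℂ, r ^ 2 = z ∧ r ∈ closedSector (|z.arg| / 2) := by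
  rcases eq_or_ne z 0 with rfl | hz
  · exact ⟨0, by simp, by simp [closedSector, Real.pi_nonneg]⟩
  have hsq : cexp (log z / 2) ^ 2 = z := by
    rw [← Complex.exp_nat_mul, Nat.cast_ofNat, mul_div_cancel₀ _ two_ne_zero, exp_log hz]
  have him : (log z / 2).im = z.arg / 2 := by simp [log_im]
  have hpi := Real.pi_pos
  have hlower := neg_pi_lt_arg z
  have hupper := arg_le_pi z
  rcases le_total 0 z.arg with harg | harg
  · refine ⟨cexp (log z / 2), hsq, ?_⟩
    rw [closedSector, mem_ofPred_eq, arg_exp_eq_im (by rw [him]; constructor <;> linarith), him,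
      abs_of_nonneg harg]
    constructor <;> linarith
  · have him' : (log z / 2 + Real.pi * I).im = z.arg / 2 + Real.pi := by simp [log_im]
    refine ⟨cexp (log z / 2 + Real.pi * I), ?_, ?_⟩
    · rw [Complex.exp_add, exp_pi_mul_I, mul_neg_one, neg_sq, hsq]
    rw [closedSector, mem_ofPred_eq, arg_exp_eq_im (by rw [him']; constructor <;> linarith), him',
      abs_of_nonpos harg]
    constructor <;> linarith

theorem norm_eq_sqrt_norm_of_sq_eq {r z : ℂ} (h : r ^ 2 = z) : ‖r‖ = √‖z‖ := by
  rw [← h, norm_pow, Real.sqrt_sq (norm_nonneg r)]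

theorem exists_tendsto_sq_eq_mem_closedSector :
    ∃ s : ℂ → ℂ, (∀ z, s z ^ 2 = z) ∧ (∀ z, s z ∈ closedSector (|z.arg| / 2)) ∧
      Tendsto s (cobounded ℂ) (cobounded ℂ) := by
  choose s hs hmem using exists_sq_eq_mem_closedSector
  refine ⟨s, hs, hmem, tendsto_norm_atTop_iff_cobounded.1 ?_⟩
  simpa only [Function.comp_def, norm_eq_sqrt_norm_of_sq_eq (hs _)] using
    Real.tendsto_sqrt_atTop.comp (tendsto_norm_cobounded_atTop (E := ℂ))

theorem tendsto_of_tendsto_comp_sq {E : Type*} {g : ℂ → E} {L : Filter E} {δ : ℝ}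
    (hg : Tendsto (fun r => g (r ^ 2)) (cobounded ℂ ⊓ 𝓟 (closedSector δ)) L) :
    Tendsto g (cobounded ℂ ⊓ 𝓟 {z | 2 * δ ≤ |z.arg|}) L := by
  obtain ⟨s, hs, hmem, htop⟩ := exists_tendsto_sq_eq_mem_closedSector
  have hsector : Tendsto s (cobounded ℂ ⊓ 𝓟 {z | 2 * δ ≤ |z.arg|})
      (cobounded ℂ ⊓ 𝓟 (closedSector δ)) := by
    refine htop.inf (tendsto_principal_principal.2 fun z (hz : 2 * δ ≤ |z.arg|) => ?_)
    have hz' : δ ≤ |z.arg| / 2 := by linarith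
    exact ⟨hz'.trans (hmem z).1, (hmem z).2.trans (by linarith)⟩
  simpa only [Function.comp_def, hs] using hg.comp hsector

theorem isBigO_principal_of_cocompact_inf {X E F : Type*} [TopologicalSpace X]
    [SeminormedAddCommGroup E] [NormedAddCommGroup F] {f : X → E} {g : X → F} {s : Set X}
    (hf : Continuous f) (hg : Continuous g) (hg0 : ∀ x, g x ≠ 0)
    (h : f =O[cocompact X ⊓ 𝓟 s] g) : f =O[𝓟 s] g := by
  obtain ⟨C, hC⟩ := h.bound
  obtain ⟨t, ht, hts⟩ := mem_cocompact.1 (eventually_inf_principal.1 hC)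
  have hcompact : f =O[𝓟 t] g :=
    (hf.continuousOn.isBigO_principal ht (c := (1 : ℝ)) (by simp)).trans
      (hg.continuousOn.isBigO_rev_principal ht (fun x _ => hg0 x) 1)
  obtain ⟨D, hD⟩ := isBigO_principal.1 hcompact
  refine isBigO_principal.2 ⟨max C D, fun x hx => ?_⟩
  by_cases hxt : x ∈ t
  · exact (hD x hxt).trans (by gcongr; exact le_max_right C D)
  · exact (hts hxt hx).trans (by gcongr; exact le_max_left C D)

/-- `log` maps the sector `|arg z| ≤ θ` onto a strip, to which Phragmén–Lindelöf applies. -/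
theorem norm_le_of_isBigO_exp_rpow {g : ℂ → ℂ} {θ c B K : ℝ} (hg : Differentiable ℂ g)
    (hθ0 : 0 < θ) (hθπ : θ < Real.pi) (hc0 : 0 ≤ c) (hc : c < Real.pi / (2 * θ))
    (hgrowth : g =O[cobounded ℂ] fun z => Real.exp (B * ‖z‖ ^ c))
    (hK : ∀ z : ℂ, θ ≤ |z.arg| → ‖g z‖ ≤ K) (z : ℂ) : ‖g z‖ ≤ K := by
  have hglobal : g =O[⊤] fun z => Real.exp (B * ‖z‖ ^ c) := by
    rw [← principal_univ]
    refine isBigO_principal_of_cocompact_inf hg.continuous ?_ (fun _ => Real.exp_ne_zero _) ?_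
    · exact ((continuous_norm.rpow_const fun _ => .inr hc0).const_mul B).rexp
    · rwa [principal_univ, inf_top_eq, ← Metric.cobounded_eq_cocompact]
  have hstrip : (fun w => g (cexp w)) =O[⊤] fun w => Real.exp (|B| * Real.exp (c * |w.re|)) := by
    refine (hglobal.comp_tendsto tendsto_top).trans (.of_norm_le fun w => ?_)
    rw [Function.comp_apply, Real.norm_eq_abs, Real.abs_exp, norm_exp, ← Real.exp_mul,
      mul_comm w.re c]
    gcongr <;> exact le_abs_self _
  have hedge : ∀ w : ℂ, |w.im| = θ → ‖g (cexp w)‖ ≤ K := by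
    intro w hw
    refine hK _ ?_
    rw [arg_exp_eq_im ⟨neg_lt_of_abs_lt (hw.trans_lt hθπ), (le_of_abs_le (hw.trans_lt hθπ).le)⟩, hw]
  have hne : ∀ z ≠ 0, ‖g z‖ ≤ K := by
    intro z hz
    rcases le_total θ |z.arg| with harg | harg
    · exact hK z harg
    rw [← exp_log hz]
    refine PhragmenLindelof.horizontal_strip (f := fun w => g (cexp w)) (a := -θ) (b := θ)
      (hg.comp differentiable_exp).diffContOnCl
      ⟨c, by rwa [sub_neg_eq_add, ← two_mul], |B|, hstrip.mono le_top⟩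
      (fun w hw => hedge w (by rw [hw, abs_neg, abs_of_pos hθ0]))
      (fun w hw => hedge w (by rw [hw, abs_of_pos hθ0])) ?_ ?_
    · exact (abs_le.1 harg).1.trans_eq (log_im z).symm
    · exact (log_im z).trans_le (abs_le.1 harg).2
  exact (isClosed_le hg.continuous.norm continuous_const).closure_subset_iff.2 hne
    (dense_compl_singleton (0 : ℂ) z)

theorem eq_of_isBigO_exp_rpow_of_tendsto {g : ℂ → ℂ} {θ c B : ℝ} {a : ℂ} (hg : Differentiable ℂ g)
    (hθ0 : 0 < θ) (hθπ : θ < Real.pi) (hc0 : 0 ≤ c) (hc : c < Real.pi / (2 * θ))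
    (hgrowth : g =O[cobounded ℂ] fun z => Real.exp (B * ‖z‖ ^ c))
    (hlim : Tendsto g (cobounded ℂ ⊓ 𝓟 {z | θ ≤ |z.arg|}) (𝓝 a)) (z : ℂ) : g z = a := by
  have hsector : g =O[𝓟 {z | θ ≤ |z.arg|}] fun _ => (1 : ℝ) := by
    refine isBigO_principal_of_cocompact_inf hg.continuous continuous_const
      (fun _ => one_ne_zero) ?_
    rw [← Metric.cobounded_eq_cocompact]
    exact hlim.isBigO_one ℝ
  obtain ⟨K, hK⟩ := isBigO_principal.1 hsector
  have hbounded : ∀ z, ‖g z‖ ≤ K * ‖(1 : ℝ)‖ :=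
    norm_le_of_isBigO_exp_rpow hg hθ0 hθπ hc0 hc hgrowth hK
  obtain ⟨d, hd⟩ := hg.exists_const_forall_eq_of_bounded
    (isBounded_iff_forall_norm_le.2 ⟨_, forall_mem_range.2 hbounded⟩)
  have hray : Tendsto (fun t : ℝ => ((-t : ℝ) : ℂ)) atTop
      (cobounded ℂ ⊓ 𝓟 {z | θ ≤ |z.arg|}) := by
    refine tendsto_inf.2 ⟨tendsto_norm_atTop_iff_cobounded.1 ?_, tendsto_principal.2 ?_⟩
    · simpa only [norm_real, norm_neg] using tendsto_norm_atTop_atTop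
    · filter_upwards [eventually_gt_atTop 0] with t ht
      rw [arg_ofReal_of_neg (neg_neg_of_pos ht), abs_of_pos Real.pi_pos]
      exact hθπ.le
  have hconst := hlim.comp hray
  simp only [Function.comp_def, hd] at hconst
  rw [hd, tendsto_const_nhds_iff.1 hconst]

section Weyl

variable {q qt : ℝ → ℂ} {b x : ℝ}

theorem SolvesIVP.isBigO_one_exp_mul {y y' : ℂ → ℝ → ℂ} {α β : ℂ} (hq : ContinuousOn q (Icc 0 b))
    (hy : ∀ l, SolvesIVP q l b α β (y l) (y' l)) (hx : x ∈ Icc 0 b) :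
    (fun r => cexp (I * r * x) * y (r ^ 2) x) =O[cobounded ℂ ⊓ 𝓟 {r | 0 ≤ r.im}]
      fun _ => (1 : ℝ) := by
  obtain ⟨Q, hQ⟩ := isCompact_Icc.exists_bound_of_continuousOn hq
  have hQ0 : 0 ≤ Q := (norm_nonneg _).trans (hQ x hx)
  refine .of_bound √((‖β‖ ^ 2 + ‖α‖ ^ 2) * Real.exp (Q * b)) (eventually_inf_principal.2 ?_)
  filter_upwards [tendsto_norm_cobounded_atTop.eventually_ge_atTop 1] with r hr1 hr
  have hr0 : r ≠ 0 := norm_pos_iff.1 (one_pos.trans_le hr1)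
  rw [norm_one, mul_one]
  refine Real.le_sqrt_of_sq_le (le_of_mul_le_mul_left ?_ (by positivity : 0 < ‖r‖ ^ 2))
  calc ‖r‖ ^ 2 * ‖cexp (I * r * x) * y (r ^ 2) x‖ ^ 2
      ≤ (‖β‖ ^ 2 + ‖r‖ ^ 2 * ‖α‖ ^ 2) * Real.exp (Q / ‖r‖ * x) := by
        simpa only [(hy _).apply_zero, (hy _).deriv_zero] using
          (hy (r ^ 2)).norm_sq_mul_norm_exp_mul_sq_le hQ hr hr0 hx
    _ ≤ (‖r‖ ^ 2 * ‖β‖ ^ 2 + ‖r‖ ^ 2 * ‖α‖ ^ 2) * Real.exp (Q * b) := by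
        gcongr
        · exact le_mul_of_one_le_left (sq_nonneg _) (one_le_pow₀ hr1)
        · exact hx.1
        · exact div_le_self hQ0 hr1
        · exact hx.2
    _ = ‖r‖ ^ 2 * ((‖β‖ ^ 2 + ‖α‖ ^ 2) * Real.exp (Q * b)) := by ring

theorem SolvesIVP.isBigO_exp_rpow {y y' : ℂ → ℝ → ℂ} {α β : ℂ} (hq : ContinuousOn q (Icc 0 b))
    (hy : ∀ l, SolvesIVP q l b α β (y l) (y' l)) (hx : x ∈ Icc 0 b) :
    (fun l => y l x) =O[cobounded ℂ] fun l => Real.exp (x * ‖l‖ ^ (1 / 2 : ℝ)) := by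
  obtain ⟨s, hs, hmem, htop⟩ := exists_tendsto_sq_eq_mem_closedSector
  have him : ∀ l, 0 ≤ (s l).im := fun l => im_nonneg_of_mem_closedSector (by positivity) (hmem l)
  have hweighted : (fun l => cexp (I * s l * x) * y l x) =O[cobounded ℂ] fun _ => (1 : ℝ) := by
    simpa only [Function.comp_def, hs] using (isBigO_one_exp_mul hq hy hx).comp_tendsto
      (tendsto_inf.2 ⟨htop, tendsto_principal.2 (.of_forall him)⟩)
  have hweight : (fun l => cexp (-(I * s l * x))) =O[cobounded ℂ]
      fun l => Real.exp (x * ‖l‖ ^ (1 / 2 : ℝ)) := by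
    refine .of_norm_le fun l => ?_
    have hre : (-(I * s l * x)).re = x * (s l).im := by simp [mul_comm]
    rw [norm_exp, hre, ← Real.sqrt_eq_rpow, ← norm_eq_sqrt_norm_of_sq_eq (hs l)]
    gcongr
    · exact hx.1
    · exact im_le_norm _
  simpa [← mul_assoc, ← Complex.exp_add] using hweight.mul hweighted

theorem mul_eq_mul_of_tendsto_weyl {φ φ' S S' φt φt' St St' : ℂ → ℝ → ℂ} {h ht : ℂ} {δ : ℝ}
    {M : ℂ → ℂ} (hδ0 : 0 < δ) (hδ2 : δ < Real.pi / 2)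
    (hq : ContinuousOn q (Icc 0 b)) (hqt : ContinuousOn qt (Icc 0 b))
    (hφ : ∀ l, SolvesIVP q l b 1 (-h) (φ l) (φ' l)) (hS : ∀ l, SolvesIVP q l b 0 1 (S l) (S' l))
    (hφt : ∀ l, SolvesIVP qt l b 1 (-ht) (φt l) (φt' l))
    (hSt : ∀ l, SolvesIVP qt l b 0 1 (St l) (St' l)) (hx : x ∈ Icc 0 b)
    (hψ : Tendsto (fun r => cexp (-(I * r * x)) * (S (r ^ 2) x + M (r ^ 2) * φ (r ^ 2) x))
      (cobounded ℂ ⊓ 𝓟 (closedSector δ)) (𝓝 0))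
    (hψt : Tendsto (fun r => cexp (-(I * r * x)) * (St (r ^ 2) x + M (r ^ 2) * φt (r ^ 2) x))
      (cobounded ℂ ⊓ 𝓟 (closedSector δ)) (𝓝 0)) (l : ℂ) :
    S l x * φt l x = φ l x * St l x := by
  have hle : cobounded ℂ ⊓ 𝓟 (closedSector δ) ≤ cobounded ℂ ⊓ 𝓟 {r | 0 ≤ r.im} :=
    inf_le_inf_left _ (principal_mono.2 fun r => im_nonneg_of_mem_closedSector hδ0.le)
  have hlim : Tendsto (fun r => S (r ^ 2) x * φt (r ^ 2) x - φ (r ^ 2) x * St (r ^ 2) x)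
      (cobounded ℂ ⊓ 𝓟 (closedSector δ)) (𝓝 0) := by
    have hψφt := ((isLittleO_one_iff ℝ).2 hψ).mul_isBigO
      ((SolvesIVP.isBigO_one_exp_mul hqt hφt hx).mono hle)
    have hφψt := ((isLittleO_one_iff ℝ).2 hψt).mul_isBigO
      ((SolvesIVP.isBigO_one_exp_mul hq hφ hx).mono hle)
    simp only [mul_one] at hψφt hφψt
    refine ((isLittleO_one_iff ℝ).1 (hψφt.sub hφψt)).congr fun r => ?_
    have hexp : cexp (-(I * r * x)) * cexp (I * r * x) = 1 := by
      rw [← Complex.exp_add, neg_add_cancel, Complex.exp_zero]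
    linear_combination
      (S (r ^ 2) x * φt (r ^ 2) x - φ (r ^ 2) x * St (r ^ 2) x) * hexp
  have hgrowth : (fun l => S l x * φt l x - φ l x * St l x) =O[cobounded ℂ]
      fun l => Real.exp (2 * x * ‖l‖ ^ (1 / 2 : ℝ)) := by
    simp only [two_mul x, add_mul, Real.exp_add]
    exact ((SolvesIVP.isBigO_exp_rpow hq hS hx).mul (SolvesIVP.isBigO_exp_rpow hqt hφt hx)).sub
      ((SolvesIVP.isBigO_exp_rpow hq hφ hx).mul (SolvesIVP.isBigO_exp_rpow hqt hSt hx))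
  have hentire : Differentiable ℂ fun l => S l x * φt l x - φ l x * St l x :=
    ((SolvesIVP.differentiable hq hφ hS hS hx).mul
      (SolvesIVP.differentiable hqt hφt hSt hφt hx)).sub
    ((SolvesIVP.differentiable hq hφ hS hφ hx).mul (SolvesIVP.differentiable hqt hφt hSt hSt hx))
  have hangle : (1 / 2 : ℝ) < Real.pi / (2 * (2 * δ)) := by
    rw [lt_div_iff₀ (by positivity)]
    linarith
  exact sub_eq_zero.1 (eq_of_isBigO_exp_rpow_of_tendsto hentire (by positivity) (by linarith)
    (by norm_num) hangle hgrowth (tendsto_of_tendsto_comp_sq hlim) l)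

end Weyl

section Differentiation

variable {u v ut vt y z : ℝ → ℂ} {u' v' ut' vt' y' z' w : ℂ} {s : Set ℝ} {x : ℝ}

theorem wronskian_mul_sq_eq_of_mul_eq_mul (hs : UniqueDiffWithinAt ℝ s x) (hx : x ∈ s)
    (hu : HasDerivWithinAt u u' s x) (hv : HasDerivWithinAt v v' s x)
    (hut : HasDerivWithinAt ut ut' s x) (hvt : HasDerivWithinAt vt vt' s x)
    (hw : u x * v' - u' * v x = w) (hwt : ut x * vt' - ut' * vt x = w)
    (hcross : EqOn (fun t => v t * ut t) (fun t => u t * vt t) s) :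
    w * u x ^ 2 = w * ut x ^ 2 := by
  have hderiv : v' * ut x + v x * ut' = u' * vt x + u x * vt' :=
    hs.eq_deriv _ (hv.mul hut) ((hu.mul hvt).congr hcross (hcross hx))
  linear_combination (-u x ^ 2) * hwt + ut x ^ 2 * hw - u x * ut x * hderiv
    + (u x * ut' + u' * ut x) * hcross hx

theorem mul_deriv_eq_of_sq_eq (hs : UniqueDiffWithinAt ℝ s x) (hx : x ∈ s)
    (hy : HasDerivWithinAt y y' s x) (hz : HasDerivWithinAt z z' s x)
    (hsq : EqOn (fun t => y t ^ 2) (fun t => z t ^ 2) s) : y x * y' = z x * z' := by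
  have hderiv := hs.eq_deriv _ (hy.pow 2) ((hz.pow 2).congr hsq (hsq hx))
  norm_num at hderiv
  linear_combination hderiv / 2

end Differentiation

theorem IsClassicalSolution.sub_mul_pow_four_eq_zero_of_sq_eq {q qt y y' z z' : ℝ → ℂ} {l : ℂ}
    {b x : ℝ} (hb : 0 < b) (hy : IsClassicalSolution q l b y y')
    (hz : IsClassicalSolution qt l b z z')
    (hsq : EqOn (fun x => y x ^ 2) (fun x => z x ^ 2) (Icc 0 b)) (hx : x ∈ Icc 0 b) :
    (q x - qt x) * y x ^ 4 = 0 := by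
  have hmul : EqOn (fun x => y x * y' x) (fun x => z x * z' x) (Icc 0 b) := fun t ht =>
    mul_deriv_eq_of_sq_eq (uniqueDiffOn_Icc hb t ht) ht (hy.hasDerivWithinAt t ht)
      (hz.hasDerivWithinAt t ht) hsq
  have hderiv : y' x * y' x + y x * ((q x - l) * y x) = z' x * z' x + z x * ((qt x - l) * z x) :=
    (uniqueDiffOn_Icc hb x hx).eq_deriv _
      ((hy.hasDerivWithinAt x hx).mul (hy.hasDerivWithinAt' x hx))
      (((hz.hasDerivWithinAt x hx).mul (hz.hasDerivWithinAt' x hx)).congr hmul (hmul hx))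
  linear_combination y x ^ 2 * hderiv + (z' x ^ 2 - (qt x - l) * y x ^ 2) * hsq hx
    - (y x * y' x + z x * z' x) * hmul hx

theorem eqOn_and_eq_of_mul_eq_mul {q qt φ φ' S S' φt φt' St St' : ℝ → ℂ} {l h ht : ℂ} {b : ℝ}
    (hb : 0 < b) (hφ : SolvesIVP q l b 1 (-h) φ φ') (hS : SolvesIVP q l b 0 1 S S')
    (hφt : SolvesIVP qt l b 1 (-ht) φt φt') (hSt : SolvesIVP qt l b 0 1 St St')
    (hcross : EqOn (fun x => S x * φt x) (fun x => φ x * St x) (Icc 0 b)) :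
    EqOn q qt (Icc 0 b) ∧ h = ht := by
  have hW : ∀ x ∈ Icc 0 b, φ x * S' x - φ' x * S x = 1 := fun x hx => by
    simpa [hφ.apply_zero, hS.apply_zero, hS.deriv_zero] using hφ.wronskian_eq hS.1 hx
  have hWt : ∀ x ∈ Icc 0 b, φt x * St' x - φt' x * St x = 1 := fun x hx => by
    simpa [hφt.apply_zero, hSt.apply_zero, hSt.deriv_zero] using hφt.wronskian_eq hSt.1 hx
  have hφsq : EqOn (fun x => φ x ^ 2) (fun x => φt x ^ 2) (Icc 0 b) := fun x hx => by
    simpa using wronskian_mul_sq_eq_of_mul_eq_mul (uniqueDiffOn_Icc hb x hx) hx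
      (hφ.hasDerivWithinAt x hx) (hS.hasDerivWithinAt x hx) (hφt.hasDerivWithinAt x hx)
      (hSt.hasDerivWithinAt x hx) (hW x hx) (hWt x hx) hcross
  have hSsq : EqOn (fun x => S x ^ 2) (fun x => St x ^ 2) (Icc 0 b) := fun x hx => by
    simpa using wronskian_mul_sq_eq_of_mul_eq_mul (w := -1) (uniqueDiffOn_Icc hb x hx) hx
      (hS.hasDerivWithinAt x hx) (hφ.hasDerivWithinAt x hx) (hSt.hasDerivWithinAt x hx)
      (hφt.hasDerivWithinAt x hx) (by linear_combination -hW x hx)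
      (by linear_combination -hWt x hx) hcross.symm
  refine ⟨fun x hx => ?_, ?_⟩
  · by_contra hne
    have hφx : φ x = 0 := by
      simpa [sub_ne_zero.2 hne] using hφ.sub_mul_pow_four_eq_zero_of_sq_eq hb hφt.1 hφsq hx
    have hSx : S x = 0 := by
      simpa [sub_ne_zero.2 hne] using hS.sub_mul_pow_four_eq_zero_of_sq_eq hb hSt.1 hSsq hx
    simpa [hφx, hSx] using hW x hx
  · have h0 : (0 : ℝ) ∈ Icc 0 b := left_mem_Icc.2 hb.le
    simpa [hφ.apply_zero, hφ.deriv_zero, hφt.apply_zero, hφt.deriv_zero] using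
      mul_deriv_eq_of_sq_eq (uniqueDiffOn_Icc hb 0 h0) h0 (hφ.hasDerivWithinAt 0 h0)
        (hφt.hasDerivWithinAt 0 h0) hφsq

theorem tendsto_zero_of_norm_mul_sub_one_le {L : Filter ℂ} (hL : L ≤ cobounded ℂ) {u : ℂ → ℂ}
    {C : ℝ} (hu : ∀ᶠ r in L, ‖I * r * u r - 1‖ ≤ C / ‖r‖) : Tendsto u L (𝓝 0) := by
  have hinv : Tendsto (fun r : ℂ => r⁻¹) L (𝓝 0) := tendsto_inv₀_cobounded.mono_left hL
  have hne : ∀ᶠ r in L, r ≠ 0 := hL (eventually_ne_cobounded 0)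
  have hprod : Tendsto (fun r => I * r * u r) L (𝓝 1) := by
    refine tendsto_iff_norm_sub_tendsto_zero.2 (squeeze_zero' (.of_forall fun _ => norm_nonneg _)
      hu ?_)
    simpa [div_eq_mul_inv] using hinv.norm.const_mul C
  have hlim : Tendsto (fun r => -I * r⁻¹ * (I * r * u r)) L (𝓝 0) := by
    simpa using (hinv.const_mul (-I)).mul hprod
  refine hlim.congr' ?_
  filter_upwards [hne] with r hr
  field_simp
  simp

/-- The sector asymptotics (2.10) of a Weyl solution at the point `x`, where `ψ r` and `ψ' r` stand
for the values of the solution and of its `x`-derivative at the spectral parameter `r²`. -/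
def HasWeylAsymptotics (δ x : ℝ) (ψ ψ' : ℂ → ℂ) : Prop :=
  ∃ C > (0 : ℝ), ∃ R > (0 : ℝ), ∀ r : ℂ, δ ≤ r.arg → r.arg ≤ Real.pi - δ → R ≤ ‖r‖ →
    ‖I * r * cexp (-(I * r * x)) * ψ r - 1‖ ≤ C / ‖r‖ ∧
    ‖cexp (-(I * r * x)) * ψ' r - 1‖ ≤ C / ‖r‖

theorem HasWeylAsymptotics.tendsto_exp_mul {δ x : ℝ} {ψ ψ' : ℂ → ℂ}
    (hψ : HasWeylAsymptotics δ x ψ ψ') :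
    Tendsto (fun r => cexp (-(I * r * x)) * ψ r) (cobounded ℂ ⊓ 𝓟 (closedSector δ)) (𝓝 0) := by
  obtain ⟨C, -, R, -, hR⟩ := hψ
  refine tendsto_zero_of_norm_mul_sub_one_le (C := C) inf_le_left (eventually_inf_principal.2 ?_)
  filter_upwards [tendsto_norm_cobounded_atTop.eventually_ge_atTop R] with r hr hsector
  simpa only [mul_assoc] using (hR r hsector.1 hsector.2 hr).1

theorem statement0_general {q qt : ℝ → ℂ} {h ht : ℂ} {δ b : ℝ} (hδ0 : 0 < δ)
    (hδ2 : δ < Real.pi / 2) (hb : 0 < b)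
    (hq : ContinuousOn q (Icc 0 b)) (hqt : ContinuousOn qt (Icc 0 b))
    {φ φ' S S' φt φt' St St' : ℂ → ℝ → ℂ}
    (hφ : ∀ l, SLSol q l (φ l) (φ' l) (Icc 0 b) ∧ φ l 0 = 1 ∧ φ' l 0 = -h)
    (hS : ∀ l, SLSol q l (S l) (S' l) (Icc 0 b) ∧ S l 0 = 0 ∧ S' l 0 = 1)
    (hφt : ∀ l, SLSol qt l (φt l) (φt' l) (Icc 0 b) ∧ φt l 0 = 1 ∧ φt' l 0 = -ht)
    (hSt : ∀ l, SLSol qt l (St l) (St' l) (Icc 0 b) ∧ St l 0 = 0 ∧ St' l 0 = 1)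
    {M : ℂ → ℂ}
    (hψ : ∀ x ∈ Ioc 0 b, Tendsto
      (fun r => cexp (-(I * r * x)) * (S (r ^ 2) x + M (r ^ 2) * φ (r ^ 2) x))
      (cobounded ℂ ⊓ 𝓟 (closedSector δ)) (𝓝 0))
    (hψt : ∀ x ∈ Ioc 0 b, Tendsto
      (fun r => cexp (-(I * r * x)) * (St (r ^ 2) x + M (r ^ 2) * φt (r ^ 2) x))
      (cobounded ℂ ⊓ 𝓟 (closedSector δ)) (𝓝 0)) :
    (∀ x ∈ Icc 0 b, q x = qt x) ∧ h = ht := by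
  have hφ' := fun l => (hφ l).1.solvesIVP hb.le hq (hφ l).2.1 (hφ l).2.2
  have hS' := fun l => (hS l).1.solvesIVP hb.le hq (hS l).2.1 (hS l).2.2
  have hφt' := fun l => (hφt l).1.solvesIVP hb.le hqt (hφt l).2.1 (hφt l).2.2
  have hSt' := fun l => (hSt l).1.solvesIVP hb.le hqt (hSt l).2.1 (hSt l).2.2
  refine eqOn_and_eq_of_mul_eq_mul hb (hφ' 0) (hS' 0) (hφt' 0) (hSt' 0) fun x hx => ?_
  rcases hx.1.eq_or_lt with rfl | hx0
  · simp only [(hS' 0).apply_zero, (hSt' 0).apply_zero, zero_mul, mul_zero]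
  · exact mul_eq_mul_of_tendsto_weyl hδ0 hδ2 hq hqt hφ' hS' hφt' hSt' hx (hψ x ⟨hx0, hx.2⟩)
      (hψt x ⟨hx0, hx.2⟩) 0

end

/-- If the Weyl-type solutions `ψ = S + M·φ` and `ψ̃ = S̃ + M·φ̃`
(with the same function `M`) both satisfy the sector asymptotics (2.10) in
`Λ_δ = {ρ : δ ≤ arg ρ ≤ π - δ}`, then `q = q̃` on `[0,1]` and `h = h̃`. -/
theorem statement0
    (q qt : ℝ → ℂ) (h ht : ℂ) (δ : ℝ) (hδ0 : 0 < δ) (hδ2 : δ < Real.pi / 2)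
    (hq : ContinuousOn q (Icc 0 1)) (hqt : ContinuousOn qt (Icc 0 1))
    (φ φ' S S' φt φt' St St' : ℂ → ℝ → ℂ)
    (hφ : ∀ lam : ℂ, SLSol q lam (φ lam) (φ' lam) (Icc 0 1) ∧
      φ lam 0 = 1 ∧ φ' lam 0 = -h)
    (hS : ∀ lam : ℂ, SLSol q lam (S lam) (S' lam) (Icc 0 1) ∧
      S lam 0 = 0 ∧ S' lam 0 = 1)
    (hφt : ∀ lam : ℂ, SLSol qt lam (φt lam) (φt' lam) (Icc 0 1) ∧
      φt lam 0 = 1 ∧ φt' lam 0 = -ht)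
    (hSt : ∀ lam : ℂ, SLSol qt lam (St lam) (St' lam) (Icc 0 1) ∧
      St lam 0 = 0 ∧ St' lam 0 = 1)
    (M : ℂ → ℂ)
    (hasym : ∀ x ∈ Ioc (0:ℝ) 1, ∃ C > (0:ℝ), ∃ R > (0:ℝ), ∀ ρ : ℂ,
      δ ≤ ρ.arg → ρ.arg ≤ Real.pi - δ → R ≤ ‖ρ‖ →
      ‖Complex.I * ρ * Complex.exp (-(Complex.I * ρ * x)) *
          (S (ρ^2) x + M (ρ^2) * φ (ρ^2) x) - 1‖ ≤ C / ‖ρ‖ ∧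
      ‖Complex.exp (-(Complex.I * ρ * x)) *
          (S' (ρ^2) x + M (ρ^2) * φ' (ρ^2) x) - 1‖ ≤ C / ‖ρ‖)
    (hasymt : ∀ x ∈ Ioc (0:ℝ) 1, ∃ C > (0:ℝ), ∃ R > (0:ℝ), ∀ ρ : ℂ,
      δ ≤ ρ.arg → ρ.arg ≤ Real.pi - δ → R ≤ ‖ρ‖ →
      ‖Complex.I * ρ * Complex.exp (-(Complex.I * ρ * x)) *
          (St (ρ^2) x + M (ρ^2) * φt (ρ^2) x) - 1‖ ≤ C / ‖ρ‖ ∧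
      ‖Complex.exp (-(Complex.I * ρ * x)) *
          (St' (ρ^2) x + M (ρ^2) * φt' (ρ^2) x) - 1‖ ≤ C / ‖ρ‖) :
    (∀ x ∈ Icc (0:ℝ) 1, q x = qt x) ∧ h = ht := by
  exact statement0_general hδ0 hδ2 one_pos hq hqt hφ hS hφt hSt
    (fun x hx => HasWeylAsymptotics.tendsto_exp_mul (hasym x hx))
    (fun x hx => HasWeylAsymptotics.tendsto_exp_mul (hasymt x hx))
end

section
/- Let q : [0,∞) → ℝ be measurable with ∫₀^∞ (1+x)·|q(x)| dx < ∞, and let ρ ∈ ℂ with Im ρ ≥ 0. Then there exists a function e : [0,∞) → ℂ such that e and e′ are absolutely continuous on compact subintervals of [0,∞), −e″(x) + q(x)e(x) = ρ² e(x) for almost every x ∈ (0,∞), and e(x)·e^{−iρx} → 1 and e′(x)·e^{−iρx} → iρ as x → ∞. -/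
open MeasureTheory Set Complex Filter

/-!
Extend `q` by zero to the whole line and write `e(x) = e^{iρx} m(x)`, `n = -m'`. The equation
becomes `n' = -2iρ n - q m`, and the conditions at `+∞` become `m → 1`, `n → 0`, so that
`m(x) = 1 + ∫_x^∞ n(t) dt` with `n(t) = ∫_t^∞ e^{2iρ(s-t)} q(s) m(s) ds`.
For `Im ρ ≥ 0` the exponential is bounded by `1`, hence `|n(t)| ≤ k(t) sup_{[t,∞)} |m|` with
`k(t) = ∫_t^∞ |q|`, uniformly in `ρ` and including `ρ = 0`. The first moment condition says exactly
that `k` is integrable at `+∞`, and in the supremum norm weighted by `exp (2 ∫_x^∞ k)` the right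
hand side is a `1/2`-contraction. Its fixed point gives `e`; since `n` is only absolutely
continuous, the equation for `e''` holds almost everywhere.
-/

section TailIntegrals

variable {E : Type*} [NormedAddCommGroup E] {f : ℝ → E}

/-- Integrability on every right half-line: integrability near `+∞` together with local
integrability, with no condition near `-∞`. -/
def TailIntegrable (f : ℝ → E) : Prop :=
  ∀ a, IntegrableOn f (Ioi a)

namespace TailIntegrable

theorem intervalIntegrable (hf : TailIntegrable f) (a b : ℝ) : IntervalIntegrable f volume a b :=
  intervalIntegrable_iff.2 ((hf (min a b)).mono_set fun _ hx => hx.1)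

theorem locallyIntegrable (hf : TailIntegrable f) : LocallyIntegrable f := fun x =>
  ⟨Ioi (x - 1), Ioi_mem_nhds (sub_one_lt x), hf _⟩

theorem norm (hf : TailIntegrable f) : TailIntegrable fun x => ‖f x‖ :=
  fun a => (hf a).norm

variable [NormedSpace ℝ E]

theorem integral_Ioi_eq_sub (hf : TailIntegrable f) (a x : ℝ) :
    ∫ t in Ioi x, f t = (∫ t in Ioi a, f t) - ∫ t in a..x, f t := by
  rw [← intervalIntegral.integral_Ioi_sub_Ioi' (hf a) (hf x), sub_sub_cancel]

theorem continuous_integral_Ioi (hf : TailIntegrable f) :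
    Continuous fun x => ∫ t in Ioi x, f t := by
  rw [funext (hf.integral_Ioi_eq_sub 0)]
  exact continuous_const.sub (intervalIntegral.continuous_primitive hf.intervalIntegrable 0)

theorem hasDerivAt_integral_Ioi [CompleteSpace E] (hf : TailIntegrable f) (hc : Continuous f)
    (x : ℝ) : HasDerivAt (fun x => ∫ t in Ioi x, f t) (-f x) x := by
  rw [funext (hf.integral_Ioi_eq_sub 0)]
  exact (hc.integral_hasStrictDerivAt 0 x).hasDerivAt.const_sub _

theorem ae_hasDerivAt_integral_Ioi [CompleteSpace E] (hf : TailIntegrable f) :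
    ∀ᵐ x, HasDerivAt (fun x => ∫ t in Ioi x, f t) (-f x) x := by
  rw [funext (hf.integral_Ioi_eq_sub 0)]
  filter_upwards [LocallyIntegrable.ae_hasDerivAt_integral hf.locallyIntegrable] with x hx
  exact (hx 0).const_sub _

end TailIntegrable

theorem integrable_indicator_lt_prod [NormedSpace ℝ E] {a : ℝ}
    (hf : AEStronglyMeasurable f (volume.restrict (Ioi a)))
    (hxf : IntegrableOn (fun x => (x - a) • f x) (Ioi a)) :
    Integrable ({z : ℝ × ℝ | z.1 < z.2}.indicator fun z => f z.2)
      ((volume.restrict (Ioi a)).prod (volume.restrict (Ioi a))) := by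
  have hmeas : AEStronglyMeasurable ({z : ℝ × ℝ | z.1 < z.2}.indicator fun z => f z.2)
      ((volume.restrict (Ioi a)).prod (volume.restrict (Ioi a))) :=
    hf.comp_snd.indicator (measurableSet_lt measurable_fst measurable_snd)
  have hslice (s : ℝ) : (fun t => {z : ℝ × ℝ | z.1 < z.2}.indicator (fun z => f z.2) (t, s)) =
      (Iio s).indicator fun _ => f s := rfl
  refine (integrable_prod_iff' hmeas).2 ⟨.of_forall fun s => ?_, ?_⟩
  · rw [hslice, integrable_indicator_iff measurableSet_Iio, IntegrableOn,
      Measure.restrict_restrict measurableSet_Iio, inter_comm, Ioi_inter_Iio]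
    exact integrableOn_const measure_Ioo_lt_top.ne
  · refine hxf.norm.congr ?_
    filter_upwards [ae_restrict_mem measurableSet_Ioi] with s hs
    have hnorm (t : ℝ) : ‖{z : ℝ × ℝ | z.1 < z.2}.indicator (fun z => f z.2) (t, s)‖ =
        (Iio s).indicator (fun _ => ‖f s‖) t := by
      rw [norm_indicator_eq_indicator_norm]; rfl
    simp only [hnorm]
    rw [integral_indicator measurableSet_Iio, Measure.restrict_restrict measurableSet_Iio,
      inter_comm, Ioi_inter_Iio, setIntegral_const, Real.volume_real_Ioo_of_le (le_of_lt hs),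
      norm_smul, Real.norm_of_nonneg (sub_nonneg.2 (le_of_lt hs)), smul_eq_mul]

theorem integrableOn_integral_Ioi [NormedSpace ℝ E] {a : ℝ}
    (hf : AEStronglyMeasurable f (volume.restrict (Ioi a)))
    (hxf : IntegrableOn (fun x => (x - a) • f x) (Ioi a)) :
    IntegrableOn (fun t => ∫ s in Ioi t, f s) (Ioi a) := by
  refine (integrable_indicator_lt_prod hf hxf).integral_prod_left.congr ?_
  filter_upwards [ae_restrict_mem measurableSet_Ioi] with t ht
  calc ∫ s in Ioi a, {z : ℝ × ℝ | z.1 < z.2}.indicator (fun z => f z.2) (t, s)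
      = ∫ s in Ioi a, (Ioi t).indicator f s := rfl
    _ = ∫ s in Ioi t, f s := by
      rw [setIntegral_indicator measurableSet_Ioi, Ioi_inter_Ioi, sup_of_le_right (le_of_lt ht)]

namespace TailIntegrable

variable [NormedSpace ℝ E]

theorem integral_Ioi (hf : TailIntegrable f) (hxf : TailIntegrable fun x => x • f x) :
    TailIntegrable fun t => ∫ s in Ioi t, f s := by
  refine fun a => integrableOn_integral_Ioi (hf a).aestronglyMeasurable ?_
  simp only [sub_smul]
  exact (hxf a).sub ((hf a).smul a)

theorem integral_Ioi_norm (hf : TailIntegrable f) (hxf : TailIntegrable fun x => x • f x) :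
    TailIntegrable fun t => ∫ s in Ioi t, ‖f s‖ := by
  refine hf.norm.integral_Ioi fun a => Integrable.mono (hxf a)
    (continuous_id.aestronglyMeasurable.smul (hf a).norm.aestronglyMeasurable) ?_
  exact .of_forall fun x => by rw [norm_smul, norm_smul, norm_norm]

end TailIntegrable

end TailIntegrals

section AbsoluteContinuity

variable {E : Type*} [NormedAddCommGroup E] {a b c : ℝ}

theorem absolutelyContinuousOnInterval_of_dist_le {X Y : Type*} [PseudoMetricSpace X]
    [PseudoMetricSpace Y] {f : ℝ → X} {g : ℝ → Y} (hg : AbsolutelyContinuousOnInterval g a b)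
    (hfg : ∀ x ∈ uIcc a b, ∀ y ∈ uIcc a b, dist (f x) (f y) ≤ dist (g x) (g y)) :
    AbsolutelyContinuousOnInterval f a b := by
  rw [absolutelyContinuousOnInterval_iff] at hg ⊢
  intro ε hε
  obtain ⟨δ, hδ, h⟩ := hg ε hε
  refine ⟨δ, hδ, fun I hI hlen => (Finset.sum_le_sum fun i hi => ?_).trans_lt (h I hI hlen)⟩
  exact hfg _ (hI.1 i hi).1 _ (hI.1 i hi).2

variable [NormedSpace ℝ E]

theorem absolutelyContinuousOnInterval_integral {f : ℝ → E} (hf : IntervalIntegrable f volume a b)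
    (hc : c ∈ uIcc a b) :
    AbsolutelyContinuousOnInterval (fun x => ∫ t in c..x, f t) a b := by
  have hint : ∀ x ∈ uIcc a b, IntervalIntegrable f volume c x := fun x hx =>
    hf.mono_set (uIcc_subset_uIcc hc hx)
  refine absolutelyContinuousOnInterval_of_dist_le
    (hf.norm.absolutelyContinuousOnInterval_intervalIntegral hc) fun x hx y hy => ?_
  rw [dist_eq_norm, dist_eq_norm, intervalIntegral.integral_interval_sub_left (hint x hx)
    (hint y hy), intervalIntegral.integral_interval_sub_left (hint x hx).norm (hint y hy).norm]
  exact intervalIntegral.norm_integral_le_abs_integral_norm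

theorem TailIntegrable.absolutelyContinuousOnInterval_integral_Ioi {f : ℝ → E}
    (hf : TailIntegrable f) (a b : ℝ) :
    AbsolutelyContinuousOnInterval (fun x => ∫ t in Ioi x, f t) a b := by
  rw [funext (hf.integral_Ioi_eq_sub a)]
  exact contDiff_const.contDiffOn.absolutelyContinuousOnInterval.fun_sub
    (absolutelyContinuousOnInterval_integral (hf.intervalIntegrable a b) left_mem_uIcc)

theorem integral_eq_sub_of_ae_hasDerivAt [CompleteSpace E] {f f' : ℝ → E}
    (hf : AbsolutelyContinuousOnInterval f a b)
    (hderiv : ∀ᵐ x, x ∈ uIcc a b → HasDerivAt f (f' x) x)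
    (hint : IntervalIntegrable f' volume a b) : ∫ t in a..b, f' t = f b - f a := by
  have hac := hf.fun_sub (absolutelyContinuousOnInterval_integral hint left_mem_uIcc)
  obtain ⟨C, hC⟩ := hac.const_of_ae_hasDerivAt_zero <| by
    filter_upwards [hderiv, hint.ae_hasDerivAt_integral] with x hfx hIx hx
    simpa only [sub_self] using (hfx hx).fun_sub (hIx hx a left_mem_uIcc)
  have hends : f a - ∫ t in a..a, f' t = f b - ∫ t in a..b, f' t :=
    (hC a left_mem_uIcc).trans (hC b right_mem_uIcc).symm
  rw [intervalIntegral.integral_same, sub_zero] at hends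
  rw [hends, sub_sub_cancel]

end AbsoluteContinuity

section BackwardVolterra

variable {E : Type*} [NormedAddCommGroup E] {f g : ℝ → E}

/-- Continuous functions that are bounded on every right half-line: the class of unknowns of an
integral equation with data prescribed at `+∞`. -/
structure ContinuousTailBounded (f : ℝ → E) : Prop where
  continuous : Continuous f
  tail_bounded : ∀ a, ∃ C, ∀ t ≥ a, ‖f t‖ ≤ C

theorem ContinuousTailBounded.zero : ContinuousTailBounded (0 : ℝ → E) :=
  ⟨continuous_zero, fun _ => ⟨0, fun _ _ => norm_zero.le⟩⟩

theorem ContinuousTailBounded.mul {R : Type*} [NormedRing R] {f g : ℝ → R}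
    (hf : ContinuousTailBounded f) (hg : ContinuousTailBounded g) :
    ContinuousTailBounded fun t => f t * g t := by
  refine ⟨hf.continuous.mul hg.continuous, fun a => ?_⟩
  obtain ⟨C, hC⟩ := hf.tail_bounded a
  obtain ⟨D, hD⟩ := hg.tail_bounded a
  exact ⟨C * D, fun t ht => norm_mul_le_of_le (hC t ht) (hD t ht)⟩

theorem TailIntegrable.mul_continuousTailBounded {R : Type*} [NormedRing R] {q f : ℝ → R}
    (hq : TailIntegrable q) (hf : ContinuousTailBounded f) : TailIntegrable fun t => q t * f t := by
  intro a
  obtain ⟨C, hC⟩ := hf.tail_bounded a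
  refine (hq a).mul_bdd (c := C) hf.continuous.aestronglyMeasurable ?_
  filter_upwards [ae_restrict_mem measurableSet_Ioi] with t ht using hC t (le_of_lt ht)

/-- `A` is an operator whose value at `x` depends only on the restriction of its argument to
`[x, ∞)`, with Lipschitz constant `k x` for the supremum norm there. The typical example is
`A f x = ∫_x^∞ K(x, t) f(t) dt` with `k x = ∫_x^∞ |K(x, t)| dt`. -/
structure IsBackwardVolterra (A : (ℝ → E) → ℝ → E) (k : ℝ → ℝ) : Prop where
  map_zero : A 0 = 0
  continuous_map : ∀ ⦃f⦄, ContinuousTailBounded f → Continuous (A f)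
  norm_sub_le : ∀ ⦃f g⦄, ContinuousTailBounded f → ContinuousTailBounded g →
    ∀ ⦃x C⦄, (∀ t ≥ x, ‖f t - g t‖ ≤ C) → ‖A f x - A g x‖ ≤ C * k x

/-- Exponential weight in whose supremum norm `f ↦ ∫_x^∞ A f` is a contraction with constant `1/2`
when `A` is a backward Volterra operator with Lipschitz constants `k`. -/
noncomputable def volterraWeight (k : ℝ → ℝ) (x : ℝ) : ℝ :=
  Real.exp (2 * ∫ t in Ioi x, k t)

section Weight

variable {k : ℝ → ℝ} (hk : TailIntegrable k) (hk0 : ∀ x, 0 ≤ k x) (hkc : Continuous k)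

theorem volterraWeight_pos (k : ℝ → ℝ) (x : ℝ) : 0 < volterraWeight k x :=
  Real.exp_pos _

include hk in
theorem continuous_volterraWeight : Continuous (volterraWeight k) :=
  Real.continuous_exp.comp (continuous_const.mul hk.continuous_integral_Ioi)

include hk0 in
theorem one_le_volterraWeight (x : ℝ) : 1 ≤ volterraWeight k x :=
  Real.one_le_exp (mul_nonneg zero_le_two (integral_nonneg hk0))

include hk hk0 in
theorem antitone_volterraWeight : Antitone (volterraWeight k) := by
  intro x y hxy
  refine Real.exp_le_exp.2 (mul_le_mul_of_nonneg_left ?_ zero_le_two)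
  exact setIntegral_mono_set (hk x) (.of_forall hk0) (Ioi_subset_Ioi hxy).eventuallyLE

theorem tendsto_volterraWeight (k : ℝ → ℝ) : Tendsto (volterraWeight k) atTop (nhds 1) := by
  have htail : Tendsto (fun x => ∫ t in Ioi x, k t) atTop (nhds 0) :=
    tendsto_integral_Ioi_zero tendsto_id
  have hexp := (htail.const_mul 2).rexp
  rwa [mul_zero, Real.exp_zero] at hexp

include hk hkc in
theorem hasDerivAt_volterraWeight (x : ℝ) :
    HasDerivAt (volterraWeight k) (-(2 * (k x * volterraWeight k x))) x :=
  ((hk.hasDerivAt_integral_Ioi hkc x).const_mul 2).exp.congr_deriv (by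
    rw [volterraWeight]; ring)

include hk hk0 hkc in
theorem tailIntegrable_mul_volterraWeight : TailIntegrable fun t => k t * volterraWeight k t := by
  intro a
  have hderiv : IntegrableOn (fun t => -(2 * (k t * volterraWeight k t))) (Ioi a) :=
    integrableOn_Ioi_deriv_of_nonpos' (fun x _ => hasDerivAt_volterraWeight hk hkc x)
      (fun x _ => neg_nonpos.2 (mul_nonneg zero_le_two
        (mul_nonneg (hk0 x) (volterraWeight_pos k x).le))) (tendsto_volterraWeight k)
  exact (integrable_const_mul_iff (isUnit_iff_ne_zero.2 two_ne_zero) _).1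
    (integrable_neg_iff.1 hderiv)

include hk hk0 hkc in
theorem integral_mul_volterraWeight (x : ℝ) :
    ∫ t in Ioi x, k t * volterraWeight k t = (volterraWeight k x - 1) / 2 := by
  have hftc := integral_Ioi_of_hasDerivAt_of_tendsto'
    (fun t _ => hasDerivAt_volterraWeight hk hkc t)
    ((tailIntegrable_mul_volterraWeight hk hk0 hkc x).const_mul 2).neg (tendsto_volterraWeight k)
  rw [integral_neg, integral_const_mul] at hftc
  linarith

end Weight

namespace IsBackwardVolterra

variable {A : (ℝ → E) → ℝ → E} {k : ℝ → ℝ}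

theorem norm_le (hA : IsBackwardVolterra A k) (hf : ContinuousTailBounded f) {x C : ℝ}
    (hC : ∀ t ≥ x, ‖f t‖ ≤ C) : ‖A f x‖ ≤ C * k x := by
  simpa only [hA.map_zero, Pi.zero_apply, sub_zero] using
    hA.norm_sub_le hf .zero (x := x) (C := C) (by simpa only [Pi.zero_apply, sub_zero] using hC)

theorem tendsto_zero (hA : IsBackwardVolterra A k) (hf : ContinuousTailBounded f)
    (hk : Tendsto k atTop (nhds 0)) : Tendsto (A f) atTop (nhds 0) := by
  obtain ⟨C, hC⟩ := hf.tail_bounded 0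
  refine squeeze_zero_norm' ?_ (by simpa only [mul_zero] using hk.const_mul C)
  filter_upwards [eventually_ge_atTop 0] with x hx
  exact hA.norm_le hf fun t ht => hC t (hx.trans ht)

theorem tailIntegrable (hA : IsBackwardVolterra A k) (hk : TailIntegrable k)
    (hf : ContinuousTailBounded f) : TailIntegrable (A f) := by
  intro a
  obtain ⟨C, hC⟩ := hf.tail_bounded a
  refine ((hk a).const_mul C).mono' (hA.continuous_map hf).aestronglyMeasurable ?_
  filter_upwards [ae_restrict_mem measurableSet_Ioi] with x hx
  exact hA.norm_le hf fun t ht => hC t ((le_of_lt hx).trans ht)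

variable [NormedSpace ℝ E]

theorem norm_integral_sub_le (hA : IsBackwardVolterra A k) (hk : TailIntegrable k)
    (hk0 : ∀ x, 0 ≤ k x) (hkc : Continuous k) (hf : ContinuousTailBounded f)
    (hg : ContinuousTailBounded g) {C : ℝ} (hC : 0 ≤ C)
    (hfg : ∀ t, ‖f t - g t‖ ≤ C * volterraWeight k t) (x : ℝ) :
    ‖(∫ t in Ioi x, A f t) - ∫ t in Ioi x, A g t‖ ≤ C / 2 * volterraWeight k x := by
  have hpoint (t : ℝ) : ‖A f t - A g t‖ ≤ C * (k t * volterraWeight k t) := by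
    rw [mul_comm (k t), ← mul_assoc]
    exact hA.norm_sub_le hf hg fun s hs => (hfg s).trans
      (mul_le_mul_of_nonneg_left (antitone_volterraWeight hk hk0 hs) hC)
  calc ‖(∫ t in Ioi x, A f t) - ∫ t in Ioi x, A g t‖
      = ‖∫ t in Ioi x, (A f t - A g t)‖ := by
        rw [integral_sub (hA.tailIntegrable hk hf x) (hA.tailIntegrable hk hg x)]
    _ ≤ ∫ t in Ioi x, C * (k t * volterraWeight k t) :=
        norm_integral_le_of_norm_le
          ((tailIntegrable_mul_volterraWeight hk hk0 hkc x).const_mul C) (.of_forall hpoint)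
    _ = C * ((volterraWeight k x - 1) / 2) := by
        rw [integral_const_mul, integral_mul_volterraWeight hk hk0 hkc]
    _ ≤ C / 2 * volterraWeight k x := by linarith

end IsBackwardVolterra

section FixedPoint

open scoped BoundedContinuousFunction

variable [NormedSpace ℝ E] {A : (ℝ → E) → ℝ → E} {k : ℝ → ℝ}

theorem continuousTailBounded_volterraWeight_smul (hk : TailIntegrable k) (hk0 : ∀ x, 0 ≤ k x)
    (u : ℝ →ᵇ E) : ContinuousTailBounded fun x => volterraWeight k x • u x := by
  refine ⟨(continuous_volterraWeight hk).smul u.continuous,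
    fun a => ⟨volterraWeight k a * ‖u‖, fun t ht => ?_⟩⟩
  rw [norm_smul, Real.norm_of_nonneg (volterraWeight_pos k t).le]
  exact mul_le_mul (antitone_volterraWeight hk hk0 ht) (u.norm_coe_le_norm t) (norm_nonneg _)
    (volterraWeight_pos k a).le

/-- The Picard map of the equation `f x = c + ∫_x^∞ A f`, written for the unknown
`u = f / volterraWeight k`. -/
noncomputable def weightedPicardMap (A : (ℝ → E) → ℝ → E) (k : ℝ → ℝ) (c : E) (u : ℝ → E)
    (x : ℝ) : E :=
  (volterraWeight k x)⁻¹ • (c + ∫ t in Ioi x, A (fun s => volterraWeight k s • u s) t)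

namespace IsBackwardVolterra

theorem continuous_weightedPicardMap (hA : IsBackwardVolterra A k) (hk : TailIntegrable k)
    (hk0 : ∀ x, 0 ≤ k x) (c : E) (u : ℝ →ᵇ E) : Continuous (weightedPicardMap A k c u) :=
  ((continuous_volterraWeight hk).inv₀ fun x => (volterraWeight_pos k x).ne').smul
    (continuous_const.add (hA.tailIntegrable hk
      (continuousTailBounded_volterraWeight_smul hk hk0 u)).continuous_integral_Ioi)

theorem norm_weightedPicardMap_sub_le (hA : IsBackwardVolterra A k) (hk : TailIntegrable k)
    (hk0 : ∀ x, 0 ≤ k x) (hkc : Continuous k) (c : E) (u v : ℝ →ᵇ E) (x : ℝ) :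
    ‖weightedPicardMap A k c u x - weightedPicardMap A k c v x‖ ≤ ‖u - v‖ / 2 := by
  rw [weightedPicardMap, weightedPicardMap, ← smul_sub, add_sub_add_left_eq_sub, norm_smul,
    norm_inv, Real.norm_of_nonneg (volterraWeight_pos k x).le,
    inv_mul_le_iff₀' (volterraWeight_pos k x)]
  refine hA.norm_integral_sub_le hk hk0 hkc (continuousTailBounded_volterraWeight_smul hk hk0 u)
    (continuousTailBounded_volterraWeight_smul hk hk0 v) (norm_nonneg _) (fun t => ?_) x
  rw [← smul_sub, norm_smul, Real.norm_of_nonneg (volterraWeight_pos k t).le, mul_comm]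
  exact mul_le_mul_of_nonneg_right ((u - v).norm_coe_le_norm t) (volterraWeight_pos k t).le

theorem weightedPicardMap_zero (hA : IsBackwardVolterra A k) (c : E) (x : ℝ) :
    weightedPicardMap A k c (0 : ℝ →ᵇ E) x = (volterraWeight k x)⁻¹ • c := by
  have hzero : (fun s => volterraWeight k s • (0 : ℝ →ᵇ E) s) = 0 := funext fun _ => smul_zero _
  rw [weightedPicardMap, hzero, hA.map_zero]
  simp only [Pi.zero_apply, integral_zero, add_zero]

theorem norm_weightedPicardMap_le (hA : IsBackwardVolterra A k) (hk : TailIntegrable k)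
    (hk0 : ∀ x, 0 ≤ k x) (hkc : Continuous k) (c : E) (u : ℝ →ᵇ E) (x : ℝ) :
    ‖weightedPicardMap A k c u x‖ ≤ ‖c‖ + ‖u‖ / 2 := by
  have hzero : ‖weightedPicardMap A k c (0 : ℝ →ᵇ E) x‖ ≤ ‖c‖ := by
    rw [hA.weightedPicardMap_zero, norm_smul, norm_inv,
      Real.norm_of_nonneg (volterraWeight_pos k x).le]
    exact mul_le_of_le_one_left (norm_nonneg c)
      (inv_le_one_of_one_le₀ (one_le_volterraWeight hk0 x))
  calc ‖weightedPicardMap A k c u x‖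
      ≤ ‖weightedPicardMap A k c (0 : ℝ →ᵇ E) x‖ +
          ‖weightedPicardMap A k c u x - weightedPicardMap A k c (0 : ℝ →ᵇ E) x‖ :=
        norm_le_norm_add_norm_sub' _ _
    _ ≤ ‖c‖ + ‖u‖ / 2 := add_le_add hzero <| by
        simpa only [sub_zero] using hA.norm_weightedPicardMap_sub_le hk hk0 hkc c u 0 x

theorem exists_eq_weightedPicardMap [CompleteSpace E] (hA : IsBackwardVolterra A k)
    (hk : TailIntegrable k) (hk0 : ∀ x, 0 ≤ k x) (hkc : Continuous k) (c : E) :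
    ∃ u : ℝ →ᵇ E, ⇑u = weightedPicardMap A k c u := by
  let T (u : ℝ →ᵇ E) : ℝ →ᵇ E := .ofNormedAddCommGroup (weightedPicardMap A k c u)
    (hA.continuous_weightedPicardMap hk hk0 c u) _ (hA.norm_weightedPicardMap_le hk hk0 hkc c u)
  have hT : ContractingWith (1 / 2) T := by
    refine ⟨by norm_num, LipschitzWith.of_dist_le_mul fun u v => ?_⟩
    refine (BoundedContinuousFunction.dist_le (by positivity)).2 fun x => ?_
    rw [dist_eq_norm, dist_eq_norm]
    refine (hA.norm_weightedPicardMap_sub_le hk hk0 hkc c u v x).trans_eq ?_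
    push_cast
    ring
  exact ⟨hT.fixedPoint, congrArg (⇑) hT.fixedPoint_isFixedPt.symm⟩

theorem exists_eq_add_integral_Ioi [CompleteSpace E] (hA : IsBackwardVolterra A k)
    (hk : TailIntegrable k) (hk0 : ∀ x, 0 ≤ k x) (hkc : Continuous k) (c : E) :
    ∃ f, ContinuousTailBounded f ∧ ∀ x, f x = c + ∫ t in Ioi x, A f t := by
  obtain ⟨u, hu⟩ := hA.exists_eq_weightedPicardMap hk hk0 hkc c
  refine ⟨fun x => volterraWeight k x • u x, continuousTailBounded_volterraWeight_smul hk hk0 u,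
    fun x => ?_⟩
  calc volterraWeight k x • u x = volterraWeight k x • weightedPicardMap A k c u x := by rw [← hu]
    _ = c + ∫ t in Ioi x, A (fun s => volterraWeight k s • u s) t :=
      smul_inv_smul₀ (volterraWeight_pos k x).ne' _

end IsBackwardVolterra

end FixedPoint

end BackwardVolterra

section Jost

/-- The backward Volterra operator of the amplitude `m x = e^{-iρx} e(x)` of a Jost solution `e`:
the equation `-e'' + q e = ρ² e` becomes `m' = -n`, `n' = -2iρ n - q m`, and
`n = jostOperator ρ q m` is the solution of the second equation that vanishes at `+∞`. -/
noncomputable def jostOperator (ρ : ℂ) (q f : ℝ → ℂ) (x : ℝ) : ℂ :=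
  ∫ t in Ioi x, exp (2 * I * ρ * (t - x)) * (q t * f t)

variable {ρ : ℂ} {q m : ℝ → ℂ}

theorem hasDerivAt_exp_mul_ofReal (c : ℂ) (x : ℝ) :
    HasDerivAt (fun x : ℝ => exp (c * x)) (c * exp (c * x)) x :=
  ((ofRealCLM.hasDerivAt (x := x)).const_mul c).cexp.congr_deriv (by
    simp only [ofRealCLM_apply, ofReal_one]; ring)

theorem norm_exp_two_mul_I_mul (ρ : ℂ) (s : ℝ) :
    ‖exp (2 * I * ρ * s)‖ = Real.exp (-(2 * ρ.im * s)) := by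
  rw [norm_exp]
  simp

theorem norm_exp_two_mul_I_mul_le_one (hρ : 0 ≤ ρ.im) {s : ℝ} (hs : 0 ≤ s) :
    ‖exp (2 * I * ρ * s)‖ ≤ 1 := by
  rw [norm_exp_two_mul_I_mul, Real.exp_le_one_iff]
  exact neg_nonpos.2 (by positivity)

theorem continuousTailBounded_exp (hρ : 0 ≤ ρ.im) :
    ContinuousTailBounded fun t : ℝ => exp (2 * I * ρ * t) := by
  refine ⟨by fun_prop, fun a => ⟨Real.exp (-(2 * ρ.im * a)), fun t ht => ?_⟩⟩
  rw [norm_exp_two_mul_I_mul]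
  gcongr

theorem jostOperator_eq (ρ : ℂ) (q f : ℝ → ℂ) (x : ℝ) :
    jostOperator ρ q f x =
      exp (-(2 * I * ρ) * x) * ∫ t in Ioi x, q t * (exp (2 * I * ρ * t) * f t) := by
  rw [jostOperator, ← integral_const_mul]
  congr 1 with t
  rw [show 2 * I * ρ * (t - x) = -(2 * I * ρ) * x + 2 * I * ρ * t by ring, exp_add]
  ring

theorem tailIntegrable_mul_exp_mul (hρ : 0 ≤ ρ.im) (hq : TailIntegrable q)
    (hm : ContinuousTailBounded m) : TailIntegrable fun t => q t * (exp (2 * I * ρ * t) * m t) :=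
  hq.mul_continuousTailBounded ((continuousTailBounded_exp hρ).mul hm)

theorem jostOperator_sub (hρ : 0 ≤ ρ.im) (hq : TailIntegrable q) {f g : ℝ → ℂ}
    (hf : ContinuousTailBounded f) (hg : ContinuousTailBounded g) (x : ℝ) :
    jostOperator ρ q f x - jostOperator ρ q g x = jostOperator ρ q (f - g) x := by
  rw [jostOperator_eq, jostOperator_eq, jostOperator_eq, ← mul_sub, ← integral_sub
    (tailIntegrable_mul_exp_mul hρ hq hf x) (tailIntegrable_mul_exp_mul hρ hq hg x)]
  simp only [Pi.sub_apply, mul_sub]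

theorem norm_jostOperator_le (hρ : 0 ≤ ρ.im) (hq : TailIntegrable q) {f : ℝ → ℂ} {x C : ℝ}
    (hC : ∀ t ≥ x, ‖f t‖ ≤ C) : ‖jostOperator ρ q f x‖ ≤ C * ∫ t in Ioi x, ‖q t‖ := by
  rw [← integral_const_mul]
  refine norm_integral_le_of_norm_le ((hq x).norm.const_mul C) ?_
  filter_upwards [ae_restrict_mem measurableSet_Ioi] with t ht
  have hxt : x ≤ t := le_of_lt ht
  have hexp : ‖exp (2 * I * ρ * (t - x))‖ ≤ 1 := by
    exact_mod_cast norm_exp_two_mul_I_mul_le_one hρ (sub_nonneg.2 hxt)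
  calc ‖exp (2 * I * ρ * (t - x)) * (q t * f t)‖
      ≤ 1 * (‖q t‖ * C) := norm_mul_le_of_le hexp (norm_mul_le_of_le le_rfl (hC t hxt))
    _ = C * ‖q t‖ := by ring

theorem isBackwardVolterra_jostOperator (hρ : 0 ≤ ρ.im) (hq : TailIntegrable q) :
    IsBackwardVolterra (jostOperator ρ q) fun x => ∫ t in Ioi x, ‖q t‖ where
  map_zero := by ext x; simp [jostOperator]
  continuous_map f hf := by
    rw [funext (jostOperator_eq ρ q f)]
    exact (by fun_prop : Continuous fun x : ℝ => exp (-(2 * I * ρ) * x)).mul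
      (tailIntegrable_mul_exp_mul hρ hq hf).continuous_integral_Ioi
  norm_sub_le f g hf hg x C hC := by
    rw [jostOperator_sub hρ hq hf hg]
    exact norm_jostOperator_le hρ hq hC

/-- `m` is the amplitude `e^{-iρx} e(x)` of a Jost solution `e`, characterised by the integral
equation `m(x) = 1 + ∫_x^∞ n`, `n(t) = ∫_t^∞ e^{2iρ(s-t)} q(s) m(s) ds`. -/
structure IsJostAmplitude (ρ : ℂ) (q m : ℝ → ℂ) : Prop where
  continuousTailBounded : ContinuousTailBounded m
  eq_one_add_integral : ∀ x, m x = 1 + ∫ t in Ioi x, jostOperator ρ q m t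

theorem exists_isJostAmplitude (hρ : 0 ≤ ρ.im) (hq : TailIntegrable q)
    (hxq : TailIntegrable fun x => x • q x) : ∃ m, IsJostAmplitude ρ q m := by
  obtain ⟨m, hm, hm_eq⟩ := (isBackwardVolterra_jostOperator hρ hq).exists_eq_add_integral_Ioi
    (hq.integral_Ioi_norm hxq) (fun _ => integral_nonneg fun _ => norm_nonneg _)
    hq.norm.continuous_integral_Ioi 1
  exact ⟨m, hm, hm_eq⟩

theorem ae_hasDerivAt_jostOperator (hρ : 0 ≤ ρ.im) (hq : TailIntegrable q)
    (hm : ContinuousTailBounded m) :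
    ∀ᵐ x, HasDerivAt (jostOperator ρ q m)
      (-(2 * I * ρ) * jostOperator ρ q m x - q x * m x) x := by
  rw [funext (jostOperator_eq ρ q m)]
  filter_upwards [(tailIntegrable_mul_exp_mul hρ hq hm).ae_hasDerivAt_integral_Ioi] with x hx
  refine ((hasDerivAt_exp_mul_ofReal (-(2 * I * ρ)) x).mul hx).congr_deriv ?_
  have hcancel : exp (-(2 * I * ρ) * x) * exp (2 * I * ρ * x) = 1 := by
    rw [← exp_add, neg_mul, neg_add_cancel, exp_zero]
  linear_combination -q x * m x * hcancel

theorem absolutelyContinuousOnInterval_exp_mul_ofReal (c : ℂ) (a b : ℝ) :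
    AbsolutelyContinuousOnInterval (fun x : ℝ => exp (c * x)) a b :=
  (contDiff_const.mul ofRealCLM.contDiff).cexp.contDiffOn.absolutelyContinuousOnInterval

theorem absolutelyContinuousOnInterval_jostOperator (hρ : 0 ≤ ρ.im) (hq : TailIntegrable q)
    (hm : ContinuousTailBounded m) (a b : ℝ) :
    AbsolutelyContinuousOnInterval (jostOperator ρ q m) a b := by
  rw [funext (jostOperator_eq ρ q m)]
  exact (absolutelyContinuousOnInterval_exp_mul_ofReal _ a b).fun_smul
    ((tailIntegrable_mul_exp_mul hρ hq hm).absolutelyContinuousOnInterval_integral_Ioi a b)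

/-- The Jost solution `e^{iρx} m(x)` with amplitude `m`. -/
noncomputable def jostSolution (ρ : ℂ) (m : ℝ → ℂ) (x : ℝ) : ℂ :=
  exp (I * ρ * x) * m x

/-- The derivative of `jostSolution ρ m` when `m` is an amplitude, so that
`m' = -jostOperator ρ q m`. -/
noncomputable def jostDeriv (ρ : ℂ) (q m : ℝ → ℂ) (x : ℝ) : ℂ :=
  exp (I * ρ * x) * (I * ρ * m x - jostOperator ρ q m x)

namespace IsJostAmplitude

theorem tendsto_one (hm : IsJostAmplitude ρ q m) : Tendsto m atTop (nhds 1) := by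
  have htail : Tendsto (fun x => ∫ t in Ioi x, jostOperator ρ q m t) atTop (nhds 0) :=
    tendsto_integral_Ioi_zero tendsto_id
  rw [funext hm.eq_one_add_integral]
  simpa only [add_zero] using htail.const_add 1

theorem tendsto_jostOperator (hm : IsJostAmplitude ρ q m) (hρ : 0 ≤ ρ.im)
    (hq : TailIntegrable q) : Tendsto (jostOperator ρ q m) atTop (nhds 0) :=
  (isBackwardVolterra_jostOperator hρ hq).tendsto_zero hm.continuousTailBounded
    (tendsto_integral_Ioi_zero tendsto_id)

theorem tendsto_jostSolution (hm : IsJostAmplitude ρ q m) :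
    Tendsto (fun x : ℝ => jostSolution ρ m x * exp (-(I * ρ * x))) atTop (nhds 1) := by
  refine hm.tendsto_one.congr fun x => ?_
  rw [jostSolution, exp_neg, mul_comm (exp _), mul_inv_cancel_right₀ (exp_ne_zero _)]

theorem tendsto_jostDeriv (hm : IsJostAmplitude ρ q m) (hρ : 0 ≤ ρ.im) (hq : TailIntegrable q) :
    Tendsto (fun x : ℝ => jostDeriv ρ q m x * exp (-(I * ρ * x))) atTop (nhds (I * ρ)) := by
  have hlim := (hm.tendsto_one.const_mul (I * ρ)).sub (hm.tendsto_jostOperator hρ hq)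
  rw [mul_one, sub_zero] at hlim
  refine hlim.congr fun x => ?_
  rw [jostDeriv, exp_neg, mul_comm (exp _), mul_inv_cancel_right₀ (exp_ne_zero _)]

theorem continuous_jostOperator (hm : IsJostAmplitude ρ q m) (hρ : 0 ≤ ρ.im)
    (hq : TailIntegrable q) : Continuous (jostOperator ρ q m) :=
  (isBackwardVolterra_jostOperator hρ hq).continuous_map hm.continuousTailBounded

theorem continuous_jostSolution (hm : IsJostAmplitude ρ q m) :
    Continuous (jostSolution ρ m) :=
  (by fun_prop : Continuous fun x : ℝ => exp (I * ρ * x)).mul hm.continuousTailBounded.continuous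

theorem continuous_jostDeriv (hm : IsJostAmplitude ρ q m) (hρ : 0 ≤ ρ.im)
    (hq : TailIntegrable q) : Continuous (jostDeriv ρ q m) :=
  (by fun_prop : Continuous fun x : ℝ => exp (I * ρ * x)).mul
    ((hm.continuousTailBounded.continuous.const_mul _).sub (hm.continuous_jostOperator hρ hq))

variable (hm : IsJostAmplitude ρ q m) (hρ : 0 ≤ ρ.im) (hq : TailIntegrable q)
  (hxq : TailIntegrable fun x => x • q x)

include hm hρ hq hxq

theorem tailIntegrable_jostOperator : TailIntegrable (jostOperator ρ q m) :=
  (isBackwardVolterra_jostOperator hρ hq).tailIntegrable (hq.integral_Ioi_norm hxq)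
    hm.continuousTailBounded

theorem hasDerivAt (x : ℝ) : HasDerivAt m (-jostOperator ρ q m x) x := by
  have hderiv := ((hm.tailIntegrable_jostOperator hρ hq hxq).hasDerivAt_integral_Ioi
    (hm.continuous_jostOperator hρ hq) x).const_add 1
  rwa [← funext hm.eq_one_add_integral] at hderiv

theorem absolutelyContinuousOnInterval (a b : ℝ) : AbsolutelyContinuousOnInterval m a b := by
  rw [funext hm.eq_one_add_integral]
  exact contDiff_const.contDiffOn.absolutelyContinuousOnInterval.fun_add
    ((hm.tailIntegrable_jostOperator hρ hq hxq).absolutelyContinuousOnInterval_integral_Ioi a b)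

theorem hasDerivAt_jostSolution (x : ℝ) :
    HasDerivAt (jostSolution ρ m) (jostDeriv ρ q m x) x :=
  ((hasDerivAt_exp_mul_ofReal (I * ρ) x).mul (hm.hasDerivAt hρ hq hxq x)).congr_deriv (by
    rw [jostDeriv]; ring)

theorem ae_hasDerivAt_jostDeriv :
    ∀ᵐ x, HasDerivAt (jostDeriv ρ q m) ((q x - ρ ^ 2) * jostSolution ρ m x) x := by
  filter_upwards [ae_hasDerivAt_jostOperator hρ hq hm.continuousTailBounded] with x hx
  refine ((hasDerivAt_exp_mul_ofReal (I * ρ) x).mul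
    (((hm.hasDerivAt hρ hq hxq x).const_mul (I * ρ)).fun_sub hx)).congr_deriv ?_
  rw [jostSolution]
  linear_combination ρ ^ 2 * exp (I * ρ * x) * m x * I_sq

theorem absolutelyContinuousOnInterval_jostDeriv (a b : ℝ) :
    AbsolutelyContinuousOnInterval (jostDeriv ρ q m) a b :=
  (absolutelyContinuousOnInterval_exp_mul_ofReal _ a b).fun_smul
    (((hm.absolutelyContinuousOnInterval hρ hq hxq a b).const_smul (I * ρ)).fun_sub
      (absolutelyContinuousOnInterval_jostOperator hρ hq hm.continuousTailBounded a b))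

theorem slSol_jostSolution : SLSol q (ρ ^ 2) (jostSolution ρ m) (jostDeriv ρ q m) univ := by
  have hderiv_int (x : ℝ) : IntervalIntegrable (jostDeriv ρ q m) volume 0 x :=
    (hm.continuous_jostDeriv hρ hq).intervalIntegrable 0 x
  have hderiv₂_int (x : ℝ) :
      IntervalIntegrable (fun t => (q t - ρ ^ 2) * jostSolution ρ m t) volume 0 x :=
    ((hq.intervalIntegrable 0 x).sub intervalIntegrable_const).mul_continuousOn
      hm.continuous_jostSolution.continuousOn
  refine ⟨fun x _ => hderiv_int x, fun x _ => hderiv₂_int x, fun x _ => ?_, fun x _ => ?_⟩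
  · rw [intervalIntegral.integral_eq_sub_of_hasDerivAt
      (fun t _ => hm.hasDerivAt_jostSolution hρ hq hxq t) (hderiv_int x), add_sub_cancel]
  · rw [integral_eq_sub_of_ae_hasDerivAt
      (hm.absolutelyContinuousOnInterval_jostDeriv hρ hq hxq 0 x)
      ((hm.ae_hasDerivAt_jostDeriv hρ hq hxq).mono fun _ h _ => h) (hderiv₂_int x),
      add_sub_cancel]

end IsJostAmplitude

theorem exists_slSol_jost (hρ : 0 ≤ ρ.im) (hq : TailIntegrable q)
    (hxq : TailIntegrable fun x => x • q x) :
    ∃ e e' : ℝ → ℂ, SLSol q (ρ ^ 2) e e' univ ∧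
      Tendsto (fun x : ℝ => e x * exp (-(I * ρ * x))) atTop (nhds 1) ∧
      Tendsto (fun x : ℝ => e' x * exp (-(I * ρ * x))) atTop (nhds (I * ρ)) := by
  obtain ⟨m, hm⟩ := exists_isJostAmplitude hρ hq hxq
  exact ⟨jostSolution ρ m, jostDeriv ρ q m, hm.slSol_jostSolution hρ hq hxq,
    hm.tendsto_jostSolution, hm.tendsto_jostDeriv hρ hq⟩

end Jost

section HalfLine

theorem SLSol.of_eqOn {p q : ℝ → ℂ} {lam : ℂ} {y y' : ℝ → ℂ} {s t : Set ℝ}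
    (h : SLSol p lam y y' t) (hs : s.OrdConnected) (h0 : 0 ∈ s) (hst : s ⊆ t) (hpq : EqOn p q s) :
    SLSol q lam y y' s := by
  obtain ⟨hy'_int, hy''_int, hy, hy'⟩ := h
  have hrhs {x : ℝ} (hx : x ∈ s) :
      EqOn (fun t => (p t - lam) * y t) (fun t => (q t - lam) * y t) (uIcc 0 x) :=
    fun t ht => by simp only [hpq (hs.uIcc_subset h0 hx ht)]
  refine ⟨fun x hx => hy'_int x (hst hx), fun x hx => ?_, fun x hx => hy x (hst hx),
    fun x hx => ?_⟩
  · exact (hy''_int x (hst hx)).congr ((hrhs hx).mono uIoc_subset_uIcc)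
  · rw [hy' x (hst hx), intervalIntegral.integral_congr (hrhs hx)]

variable {E : Type*} [NormedAddCommGroup E] {f : ℝ → E}

theorem tailIntegrable_indicator_Ici {a : ℝ} (hf : IntegrableOn f (Ici a)) :
    TailIntegrable ((Ici a).indicator f) :=
  fun _ => ((integrable_indicator_iff measurableSet_Ici).2 hf).integrableOn

theorem integrableOn_Ici_of_one_add_smul [NormedSpace ℝ E]
    (hf : IntegrableOn (fun x : ℝ => (1 + x) • f x) (Ici 0)) : IntegrableOn f (Ici 0) := by
  have hbdd : ∀ᵐ x ∂volume.restrict (Ici (0 : ℝ)), ‖(1 + x)⁻¹‖ ≤ 1 := by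
    filter_upwards [ae_restrict_mem measurableSet_Ici] with x hx
    have hx1 : 1 ≤ 1 + x := le_add_of_nonneg_right hx
    rw [Real.norm_of_nonneg (by positivity)]
    exact inv_le_one_of_one_le₀ hx1
  refine (hf.bdd_smul 1 (by fun_prop) hbdd).congr ?_
  filter_upwards [ae_restrict_mem measurableSet_Ici] with x hx
  exact inv_smul_smul₀ (add_pos_of_pos_of_nonneg one_pos hx).ne' (f x)

end HalfLine

theorem statement6_general (q : ℝ → ℂ)
    (hq : IntegrableOn (fun x : ℝ => (1 + x) • q x) (Ici 0)) (ρ : ℂ) (hρ : 0 ≤ ρ.im) :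
    ∃ e e' : ℝ → ℂ, SLSol q (ρ ^ 2) e e' (Ici 0) ∧
      Tendsto (fun x : ℝ => e x * exp (-(I * ρ * x))) atTop (nhds 1) ∧
      Tendsto (fun x : ℝ => e' x * exp (-(I * ρ * x))) atTop (nhds (I * ρ)) := by
  have hq0 : IntegrableOn q (Ici 0) := integrableOn_Ici_of_one_add_smul hq
  have hxq : IntegrableOn (fun x => x • q x) (Ici 0) :=
    (hq.sub hq0).congr (.of_forall fun x => by simp [add_smul])
  have hxq_indicator : TailIntegrable fun x => x • (Ici 0).indicator q x := by
    simpa only [indicator_smul] using tailIntegrable_indicator_Ici hxq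
  obtain ⟨e, e', hsol, hlim⟩ :=
    exists_slSol_jost hρ (tailIntegrable_indicator_Ici hq0) hxq_indicator
  exact ⟨e, e', hsol.of_eqOn ordConnected_Ici self_mem_Ici (subset_univ _)
    eqOn_indicator, hlim⟩

/-- existence of the Jost solution `e(x,ρ)` of `-y'' + q y = ρ² y`
on `[0,∞)` with `e(x) e^{-iρx} → 1` and `e'(x) e^{-iρx} → iρ` as `x → ∞`,
under `∫₀^∞ (1+x)|q(x)| dx < ∞` and `Im ρ ≥ 0`. -/
theorem statement6
    (q : ℝ → ℝ) (hmeas : Measurable q)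
    (hq : IntegrableOn (fun x => (1 + x) * |q x|) (Ici 0))
    (ρ : ℂ) (hρ : 0 ≤ ρ.im) :
    ∃ e e' : ℝ → ℂ,
      SLSol (fun x => (q x : ℂ)) (ρ ^ 2) e e' (Ici 0) ∧
      Tendsto (fun x : ℝ => e x * Complex.exp (-(Complex.I * ρ * x))) atTop (nhds 1) ∧
      Tendsto (fun x : ℝ => e' x * Complex.exp (-(Complex.I * ρ * x))) atTop
        (nhds (Complex.I * ρ)) := by
  refine statement6_general _ (Integrable.mono hq (by fun_prop) (.of_forall fun x => ?_)) ρ hρ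
  rw [norm_smul, norm_mul, norm_real, Real.norm_eq_abs (q x), Real.norm_eq_abs |q x|, abs_abs]
end

section
/- Let q : [0,∞) → ℝ be measurable with ∫₀^∞ (1+x)·|q(x)| dx < ∞, and let λ ∈ ℝ with λ ≥ 0. If y is a solution of −y″ + q y = λ y on [0,∞) (y, y′ locally absolutely continuous, equation a.e.) with ∫₀^∞ |y(x)|² dx < ∞, then y is identically zero. -/
open MeasureTheory Set Complex

/-! Let `s` solve `-s'' = λ s` with `s 0 = 0` and `s' 0 = 1`; since `λ ≥ 0`, `|s x| ≤ x` for
`x ≥ 0`. Integrating the equation over `[a, b]` against `(b - x)² s (x - a)` eliminates `y'` and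
leaves
`(b - a) |y a| ≤ 4 ∫_a^b |y| + ∫_a^b x |q x| · (b - x) |y x| dx`.
The weight `b - x` reappears under the integral, so Grönwall's inequality with the integrable kernel
`x |q x|` yields `(b - a) |y a| ≤ C ∫_0^b |y|` with `C` independent of `b`. Dividing by `b` and
letting `b → ∞` kills `y a` as soon as the means of `|y|` over `[0, b]` tend to `0`, which Hölder's
inequality gives for square-integrable `y`. -/

section

open Filter Topology

section

variable {a b : ℝ}

theorem absolutelyContinuousOnInterval_comp_of_lipschitzOnWith {X Y : Type*}
    [PseudoMetricSpace X] [PseudoMetricSpace Y] {f : ℝ → X} {g : X → Y} {t : Set X} {K : NNReal}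
    (hg : LipschitzOnWith K g t) (hf : AbsolutelyContinuousOnInterval f a b)
    (hft : MapsTo f (uIcc a b) t) : AbsolutelyContinuousOnInterval (g ∘ f) a b := by
  rw [absolutelyContinuousOnInterval_iff] at hf ⊢
  intro ε hε
  obtain ⟨δ, hδ, h⟩ := hf (ε / (K + 1)) (by positivity)
  refine ⟨δ, hδ, fun E hE hEδ => ?_⟩
  calc ∑ i ∈ Finset.range E.1, dist (g (f (E.2 i).1)) (g (f (E.2 i).2))
      ≤ ∑ i ∈ Finset.range E.1, (K + 1) * dist (f (E.2 i).1) (f (E.2 i).2) := by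
        refine Finset.sum_le_sum fun i hi => ?_
        have hmem := hE.1 i hi
        refine (hg.dist_le_mul _ (hft hmem.1) _ (hft hmem.2)).trans ?_
        gcongr
        linarith
    _ = (K + 1) * ∑ i ∈ Finset.range E.1, dist (f (E.2 i).1) (f (E.2 i).2) :=
        (Finset.mul_sum ..).symm
    _ < (K + 1) * (ε / (K + 1)) := by gcongr; exact h E hE hEδ
    _ = ε := by field_simp

theorem absolutelyContinuousOnInterval_comp_of_contDiff {f g : ℝ → ℝ} (hg : ContDiff ℝ 1 g)
    (hf : AbsolutelyContinuousOnInterval f a b) :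
    AbsolutelyContinuousOnInterval (fun x => g (f x)) a b := by
  obtain ⟨C, hC⟩ := hf.exists_bound
  obtain ⟨K, hK⟩ := hg.contDiffOn.exists_lipschitzOnWith one_ne_zero
    (convex_Icc (-C) C) isCompact_Icc
  exact absolutelyContinuousOnInterval_comp_of_lipschitzOnWith hK hf fun x hx =>
    abs_le.1 (hC x hx)

theorem le_mul_exp_integral_of_le_add_integral {f κ : ℝ → ℝ} {C : ℝ} (hab : a ≤ b)
    (hκ : IntervalIntegrable κ volume a b) (hκ_nonneg : ∀ t ∈ Icc a b, 0 ≤ κ t)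
    (hκf : IntervalIntegrable (fun t => κ t * f t) volume a b)
    (hf : ∀ x ∈ Icc a b, f x ≤ C + ∫ t in x..b, κ t * f t) :
    f a ≤ C * Real.exp (∫ t in a..b, κ t) := by
  let P : ℝ → ℝ := fun x => (C - ∫ t in b..x, κ t * f t) * Real.exp (∫ t in b..x, κ t)
  have hP : AbsolutelyContinuousOnInterval P a b := by
    have hC : AbsolutelyContinuousOnInterval (fun _ => C) a b :=
      contDiff_const.contDiffOn.absolutelyContinuousOnInterval
    have hF := hκf.absolutelyContinuousOnInterval_intervalIntegral right_mem_uIcc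
    have hK := hκ.absolutelyContinuousOnInterval_intervalIntegral right_mem_uIcc
    exact (hC.fun_sub hF).fun_mul
      (absolutelyContinuousOnInterval_comp_of_contDiff Real.contDiff_exp hK)
  have hderiv_nonneg : ∀ᵐ x, x ∈ Icc a b → 0 ≤ deriv P x := by
    filter_upwards [hκf.ae_hasDerivAt_integral, hκ.ae_hasDerivAt_integral] with x hF hK hx
    have hx' : x ∈ uIcc a b := Icc_subset_uIcc hx
    have hP' := ((hF hx' b right_mem_uIcc).const_sub C).mul (hK hx' b right_mem_uIcc).exp
    have hgap : 0 ≤ C - (∫ t in b..x, κ t * f t) - f x := by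
      have := hf x hx
      rw [intervalIntegral.integral_symm b x] at this
      linarith
    have hκx := hκ_nonneg x hx
    calc (0 : ℝ) ≤ κ x * (C - (∫ t in b..x, κ t * f t) - f x) *
          Real.exp (∫ t in b..x, κ t) := by positivity
      _ = deriv P x := by rw [show deriv P x = _ from hP'.deriv]; ring
  have hmono : P a ≤ P b := by
    rw [← sub_nonneg, ← hP.integral_deriv_eq_sub]
    exact intervalIntegral.integral_nonneg_of_ae_restrict hab
      ((ae_restrict_iff' measurableSet_Icc).2 hderiv_nonneg)
  have hPb : P b = C := by simp [P]
  calc f a ≤ C + ∫ t in a..b, κ t * f t := hf a (left_mem_Icc.2 hab)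
    _ = P a * Real.exp (∫ t in a..b, κ t) := by
        simp only [P, intervalIntegral.integral_symm a b, sub_neg_eq_add]
        rw [mul_assoc, ← Real.exp_add, neg_add_cancel, Real.exp_zero, mul_one]
    _ ≤ C * Real.exp (∫ t in a..b, κ t) := by gcongr; exact hmono.trans_eq hPb

theorem integral_mul_eq_sub_of_integral_eq_sub {φ g G : ℝ → ℝ}
    (hφ : AbsolutelyContinuousOnInterval φ a b) (hg : IntervalIntegrable g volume a b)
    (hG : ∀ x ∈ uIcc a b, ∫ t in a..x, g t = G x - G a) :
    ∫ t in a..b, φ t * g t = φ b * G b - φ a * G a - ∫ t in a..b, deriv φ t * G t := by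
  let H : ℝ → ℝ := fun x => G a + ∫ t in a..x, g t
  have hHG : ∀ x ∈ uIcc a b, H x = G x := fun x hx => by simp only [H, hG x hx]; ring
  have hH : AbsolutelyContinuousOnInterval H a b := by
    have hGa : AbsolutelyContinuousOnInterval (fun _ => G a) a b :=
      contDiff_const.contDiffOn.absolutelyContinuousOnInterval
    exact hGa.fun_add (hg.absolutelyContinuousOnInterval_intervalIntegral left_mem_uIcc)
  have hH_deriv : ∀ᵐ x, x ∈ uIoc a b → φ x * deriv H x = φ x * g x := by
    filter_upwards [hg.ae_hasDerivAt_integral] with x hx hxab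
    rw [((hx (uIoc_subset_uIcc hxab) a left_mem_uIcc).const_add (G a)).deriv]
  rw [← intervalIntegral.integral_congr_ae hH_deriv, hφ.integral_mul_deriv_eq_deriv_mul hH,
    hHG b right_mem_uIcc, hHG a left_mem_uIcc]
  congr 1
  exact intervalIntegral.integral_congr fun x hx => by simp only [hHG x hx]

theorem continuousOn_of_integral_eq_sub {E : Type*} [NormedAddCommGroup E] [NormedSpace ℝ E]
    {g G : ℝ → E} (hg : IntervalIntegrable g volume a b)
    (hG : ∀ x ∈ uIcc a b, ∫ t in a..x, g t = G x - G a) : ContinuousOn G (uIcc a b) :=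
  (continuousOn_const.add
    (intervalIntegral.continuousOn_primitive_interval' hg left_mem_uIcc)).congr
    fun x hx => (add_eq_of_eq_sub' (hG x hx)).symm

theorem integral_smul_eq_sub_of_integral_eq_sub {E : Type*} [NormedAddCommGroup E]
    [NormedSpace ℝ E] [CompleteSpace E] {φ : ℝ → ℝ} {g G : ℝ → E}
    (hφ : AbsolutelyContinuousOnInterval φ a b) (hg : IntervalIntegrable g volume a b)
    (hG : ∀ x ∈ uIcc a b, ∫ t in a..x, g t = G x - G a) :
    ∫ t in a..b, φ t • g t = φ b • G b - φ a • G a - ∫ t in a..b, deriv φ t • G t := by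
  have hφg : IntervalIntegrable (fun t => φ t • g t) volume a b :=
    hg.continuousOn_smul hφ.continuousOn
  have hφ'G : IntervalIntegrable (fun t => deriv φ t • G t) volume a b :=
    hφ.intervalIntegrable_deriv.smul_continuousOn (continuousOn_of_integral_eq_sub hg hG)
  refine (SeparatingDual.eq_iff_forall_dual_eq (R := ℝ)).2 fun L => ?_
  have hLg : IntervalIntegrable (fun t => L (g t)) volume a b :=
    ⟨L.integrable_comp hg.1, L.integrable_comp hg.2⟩
  have hLG : ∀ x ∈ uIcc a b, ∫ t in a..x, L (g t) = L (G x) - L (G a) := fun x hx => by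
    rw [L.intervalIntegral_comp_comm (hg.mono_set (uIcc_subset_uIcc_left hx)), hG x hx, map_sub]
  simpa only [map_sub, map_smul, smul_eq_mul, ← L.intervalIntegral_comp_comm hφg,
    ← L.intervalIntegral_comp_comm hφ'G] using integral_mul_eq_sub_of_integral_eq_sub hφ hLg hLG

end

theorem integrableOn_mul_of_one_add_mul {f : ℝ → ℝ}
    (hf : IntegrableOn (fun x => (1 + x) * f x) (Ici 0)) :
    IntegrableOn (fun x => x * f x) (Ici 0) := by
  have hratio : ∀ x ∈ Ici (0 : ℝ), ‖x / (1 + x)‖ ≤ 1 := fun x hx => by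
    have hx0 : 0 ≤ x := hx
    rw [Real.norm_of_nonneg (by positivity), div_le_one (by positivity)]
    linarith
  have hratio_meas : Measurable fun x : ℝ => x / (1 + x) := by fun_prop
  refine (hf.bdd_mul hratio_meas.aestronglyMeasurable
    ((ae_restrict_iff' measurableSet_Ici).2 (ae_of_all _ hratio))).congr
    ((ae_restrict_iff' measurableSet_Ici).2 (ae_of_all _ fun x hx => ?_))
  have : 1 + x ≠ 0 := by linarith [mem_Ici.1 hx]
  field_simp

theorem tendsto_integral_norm_div_of_memLp {E : Type*} [NormedAddCommGroup E] {f : ℝ → E}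
    {p : ENNReal} (hp : 1 ≤ p) (hp_top : p ≠ ⊤) (hf : MemLp f p (volume.restrict (Ici 0))) :
    Tendsto (fun b => (∫ t in (0 : ℝ)..b, ‖f t‖) / b) atTop (𝓝 0) := by
  have hp_pos : 0 < p.toReal := ENNReal.toReal_pos (one_pos.trans_le hp).ne' hp_top
  set N := (eLpNorm f p (volume.restrict (Ici 0))).toReal
  have hHolder : ∀ b > 0, (∫ t in (0 : ℝ)..b, ‖f t‖) ≤ N * b ^ (1 - 1 / p.toReal) := by
    intro b hb
    have hle : volume.restrict (Ioc 0 b) ≤ volume.restrict (Ici (0 : ℝ)) :=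
      Measure.restrict_mono_set _ fun x hx => hx.1.le
    have hmeas := hf.1.mono_measure hle
    have hbound := (eLpNorm_le_eLpNorm_mul_rpow_measure_univ hp hmeas).trans
      (mul_le_mul_left (eLpNorm_mono_measure f hle) _)
    have hexp : 0 ≤ 1 - 1 / p.toReal := by
      have : 1 ≤ p.toReal := by simpa using ENNReal.toReal_mono hp_top hp
      rw [sub_nonneg, div_le_one hp_pos]; exact this
    rw [Measure.restrict_apply_univ, Real.volume_Ioc, sub_zero, ENNReal.toReal_one, div_one,
      ENNReal.ofReal_rpow_of_pos hb] at hbound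
    have := ENNReal.toReal_mono (ENNReal.mul_ne_top hf.2.ne ENNReal.ofReal_ne_top) hbound
    rwa [ENNReal.toReal_mul, ENNReal.toReal_ofReal (by positivity), eLpNorm_one_eq_lintegral_enorm,
      ← integral_norm_eq_lintegral_enorm hmeas, ← intervalIntegral.integral_of_le hb.le] at this
  have hdecay : Tendsto (fun b : ℝ => N * b ^ (-(1 / p.toReal))) atTop (𝓝 0) := by
    simpa only [mul_zero] using
      (tendsto_rpow_neg_atTop (y := 1 / p.toReal) (by positivity)).const_mul N
  refine squeeze_zero' ?_ ?_ hdecay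
  · filter_upwards [eventually_gt_atTop 0] with b hb
    exact div_nonneg (intervalIntegral.integral_nonneg hb.le fun t _ => norm_nonneg _) hb.le
  · filter_upwards [eventually_gt_atTop 0] with b hb
    rw [div_le_iff₀ hb, mul_assoc, ← Real.rpow_add_one hb.ne', neg_add_eq_sub]
    exact hHolder b hb

/-- The solution `s` of `-s'' = k² s` with `s 0 = 0` and `s' 0 = 1`, that is `sin (k x) / k`, or
`x` when `k = 0`; the integral covers both cases. -/
noncomputable def sineSolution (k x : ℝ) : ℝ :=
  ∫ t in (0 : ℝ)..x, Real.cos (k * t)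

theorem sineSolution_zero (k : ℝ) : sineSolution k 0 = 0 :=
  intervalIntegral.integral_same

theorem hasDerivAt_sineSolution (k x : ℝ) :
    HasDerivAt (sineSolution k) (Real.cos (k * x)) x := by
  have hcos : Continuous fun t : ℝ => Real.cos (k * t) := by fun_prop
  exact hcos.integral_hasStrictDerivAt 0 x |>.hasDerivAt

theorem mul_sineSolution (k x : ℝ) : k * sineSolution k x = Real.sin (k * x) := by
  rw [sineSolution, intervalIntegral.mul_integral_comp_mul_left, integral_cos]
  simp only [mul_zero, Real.sin_zero, sub_zero]

theorem abs_sineSolution_le (k x : ℝ) : |sineSolution k x| ≤ |x| := by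
  simpa only [sineSolution, one_mul, sub_zero, Real.norm_eq_abs] using
    intervalIntegral.norm_integral_le_of_norm_le_const
      (a := 0) (b := x) (C := 1) (f := fun t => Real.cos (k * t))
      fun t _ => Real.abs_cos_le_one (k * t)

theorem contDiff_sineSolution (k : ℝ) : ContDiff ℝ 2 (sineSolution k) := by
  have hderiv : deriv (sineSolution k) = fun x => Real.cos (k * x) :=
    funext fun x => (hasDerivAt_sineSolution k x).deriv
  rw [show (2 : WithTop ℕ∞) = 1 + 1 by norm_num, contDiff_succ_iff_deriv, hderiv]
  exact ⟨fun x => (hasDerivAt_sineSolution k x).differentiableAt, by simp,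
    Real.contDiff_cos.comp (contDiff_const.mul contDiff_id)⟩

/-- The test function `(b - x)² s(x - a)` against which the equation is integrated over `[a, b]`.
The square makes both boundary terms at `b` vanish. -/
noncomputable def cutoffSine (k a b x : ℝ) : ℝ :=
  (b - x) ^ 2 * sineSolution k (x - a)

/-- The residual `φ'' + k² φ` of the test function `φ = cutoffSine k a b`. -/
noncomputable def cutoffResidual (k a b x : ℝ) : ℝ :=
  2 * sineSolution k (x - a) - 4 * (b - x) * Real.cos (k * (x - a))

section

variable (k a b : ℝ)

theorem contDiff_cutoffSine : ContDiff ℝ 2 (cutoffSine k a b) :=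
  ((contDiff_const.sub contDiff_id).pow 2).mul
    ((contDiff_sineSolution k).comp (contDiff_id.sub contDiff_const))

theorem continuous_cutoffResidual : Continuous (cutoffResidual k a b) := by
  have := (contDiff_sineSolution k).continuous
  unfold cutoffResidual
  fun_prop

theorem deriv_cutoffSine :
    deriv (cutoffSine k a b) = fun x =>
      (b - x) ^ 2 * Real.cos (k * (x - a)) - 2 * (b - x) * sineSolution k (x - a) := by
  ext x
  have hs := (hasDerivAt_sineSolution k (x - a)).comp_sub_const x a
  exact ((((hasDerivAt_id x).const_sub b).pow 2).mul hs).congr_deriv (by simp; ring) |>.deriv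

theorem deriv_deriv_cutoffSine :
    deriv (deriv (cutoffSine k a b)) = fun x =>
      cutoffResidual k a b x - k ^ 2 * cutoffSine k a b x := by
  ext x
  have hs := (hasDerivAt_sineSolution k (x - a)).comp_sub_const x a
  have hc : HasDerivAt (fun x => Real.cos (k * (x - a)))
      (-(k ^ 2 * sineSolution k (x - a))) x := by
    refine (((hasDerivAt_id x).sub_const a).const_mul k).cos.congr_deriv ?_
    simp only [id_eq, ← mul_sineSolution]; ring
  have hb := (hasDerivAt_id x).const_sub b
  rw [deriv_cutoffSine]
  refine (((hb.pow 2).mul hc).sub ((hb.const_mul 2).mul hs)).congr_deriv ?_ |>.deriv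
  simp only [cutoffResidual, cutoffSine, id_eq, Pi.pow_apply]; ring

variable {k a b} {x : ℝ}

theorem abs_cutoffSine_le (hx : x ∈ Icc a b) :
    |cutoffSine k a b x| ≤ (b - a) * ((x - a) * (b - x)) := by
  have hxa : 0 ≤ x - a := sub_nonneg.2 hx.1
  have hbx : 0 ≤ b - x := sub_nonneg.2 hx.2
  have hs : |sineSolution k (x - a)| ≤ x - a :=
    (abs_sineSolution_le k _).trans_eq (abs_of_nonneg hxa)
  calc |cutoffSine k a b x| = (b - x) ^ 2 * |sineSolution k (x - a)| := by
        rw [cutoffSine, abs_mul, abs_of_nonneg (sq_nonneg _)]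
    _ ≤ ((b - a) * (b - x)) * (x - a) := by
        rw [sq]
        gcongr
        · exact mul_nonneg (by linarith) hbx
        · linarith
    _ = (b - a) * ((x - a) * (b - x)) := by ring

theorem abs_cutoffResidual_le (hx : x ∈ Icc a b) : |cutoffResidual k a b x| ≤ 4 * (b - a) := by
  have hxa : 0 ≤ x - a := sub_nonneg.2 hx.1
  have hbx : 0 ≤ b - x := sub_nonneg.2 hx.2
  have hs : |sineSolution k (x - a)| ≤ x - a :=
    (abs_sineSolution_le k _).trans_eq (abs_of_nonneg hxa)
  calc |cutoffResidual k a b x|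
      ≤ |2 * sineSolution k (x - a)| + |4 * (b - x) * Real.cos (k * (x - a))| := abs_sub _ _
    _ = 2 * |sineSolution k (x - a)| + 4 * (b - x) * |Real.cos (k * (x - a))| := by
        rw [abs_mul, abs_mul (4 * (b - x)), abs_two,
          abs_of_nonneg (by positivity : 0 ≤ 4 * (b - x))]
    _ ≤ 2 * (x - a) + 4 * (b - x) * 1 := by
        gcongr
        exact Real.abs_cos_le_one _
    _ ≤ 4 * (b - a) := by linarith

end

namespace SLSol

variable {q y y' : ℝ → ℂ} {lam : ℂ} {s : Set ℝ} {a b : ℝ}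

theorem intervalIntegrable_deriv (h : SLSol q lam y y' s) (ha : a ∈ s) (hb : b ∈ s) :
    IntervalIntegrable y' volume a b :=
  (h.1 a ha).symm.trans (h.1 b hb)

theorem intervalIntegrable_deriv_deriv (h : SLSol q lam y y' s) (ha : a ∈ s) (hb : b ∈ s) :
    IntervalIntegrable (fun t => (q t - lam) * y t) volume a b :=
  (h.2.1 a ha).symm.trans (h.2.1 b hb)

theorem integral_deriv (h : SLSol q lam y y' s) (ha : a ∈ s) (hb : b ∈ s) :
    ∫ t in a..b, y' t = y b - y a := by
  rw [h.2.2.1 a ha, h.2.2.1 b hb, add_sub_add_left_eq_sub,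
    intervalIntegral.integral_interval_sub_left (h.1 b hb) (h.1 a ha)]

theorem integral_deriv_deriv (h : SLSol q lam y y' s) (ha : a ∈ s) (hb : b ∈ s) :
    ∫ t in a..b, (q t - lam) * y t = y' b - y' a := by
  rw [h.2.2.2 a ha, h.2.2.2 b hb, add_sub_add_left_eq_sub,
    intervalIntegral.integral_interval_sub_left (h.2.1 b hb) (h.2.1 a ha)]

theorem continuousOn_uIcc (h : SLSol q lam y y' s) (hab : uIcc a b ⊆ s) :
    ContinuousOn y (uIcc a b) := by
  have ha := hab left_mem_uIcc
  exact continuousOn_of_integral_eq_sub (h.intervalIntegrable_deriv ha (hab right_mem_uIcc))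
    fun x hx => h.integral_deriv ha (hab hx)

theorem continuousOn_Ici (h : SLSol q lam y y' (Ici a)) : ContinuousOn y (Ici a) := by
  intro x hx
  have hsub : uIcc a (x + 1) ⊆ Ici a := by
    rw [uIcc_of_le (by linarith [mem_Ici.1 hx])]
    exact Icc_subset_Ici_self
  have hmem : uIcc a (x + 1) ∈ 𝓝[Ici a] x := by
    rw [uIcc_of_le (by linarith [mem_Ici.1 hx]), ← Ici_inter_Iic]
    exact inter_mem_nhdsWithin _ (Iic_mem_nhds (by linarith))
  exact (h.continuousOn_uIcc hsub x (mem_of_mem_nhdsWithin hx hmem)).mono_of_mem_nhdsWithin hmem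

theorem intervalIntegrable_potential_mul (h : SLSol q lam y y' s) (hab : uIcc a b ⊆ s) :
    IntervalIntegrable (fun t => q t * y t) volume a b := by
  have hlam : IntervalIntegrable (fun t => lam * y t) volume a b :=
    (continuousOn_const.mul (h.continuousOn_uIcc hab)).intervalIntegrable
  refine ((h.intervalIntegrable_deriv_deriv (hab left_mem_uIcc) (hab right_mem_uIcc)).add
    hlam).congr fun t _ => ?_
  ring

theorem intervalIntegrable_mul_norm_potential_mul (h : SLSol q lam y y' s) (hab : uIcc a b ⊆ s)
    {v w : ℝ → ℝ} (hv : ContinuousOn v (uIcc a b)) (hw : ContinuousOn w (uIcc a b)) :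
    IntervalIntegrable (fun t => v t * ‖q t‖ * (w t * ‖y t‖)) volume a b := by
  refine ((h.intervalIntegrable_potential_mul hab).norm.continuousOn_mul
    (hv.mul hw)).congr fun t _ => ?_
  simp only [Pi.mul_apply, norm_mul]; ring

theorem integral_smul_sub_deriv_deriv_smul (h : SLSol q lam y y' s) (hab : uIcc a b ⊆ s)
    {φ : ℝ → ℝ} (hφ : ContDiff ℝ 2 φ) :
    ∫ t in a..b, (φ t • ((q t - lam) * y t) - deriv (deriv φ) t • y t) =
      (φ b • y' b - deriv φ b • y b) - (φ a • y' a - deriv φ a • y a) := by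
  have ha := hab left_mem_uIcc
  have hb := hab right_mem_uIcc
  have hφ' : ContDiff ℝ 1 (deriv φ) := hφ.deriv'
  have hparts := integral_smul_eq_sub_of_integral_eq_sub
    (hφ.of_le one_le_two).contDiffOn.absolutelyContinuousOnInterval
    (h.intervalIntegrable_deriv_deriv ha hb) fun x hx => h.integral_deriv_deriv ha (hab hx)
  have hparts' := integral_smul_eq_sub_of_integral_eq_sub
    hφ'.contDiffOn.absolutelyContinuousOnInterval
    (h.intervalIntegrable_deriv ha hb) fun x hx => h.integral_deriv ha (hab hx)
  have hφ''_cont : Continuous (deriv (deriv φ)) := hφ'.continuous_deriv le_rfl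
  rw [intervalIntegral.integral_sub, hparts, hparts']
  · abel
  · exact (h.intervalIntegrable_deriv_deriv ha hb).continuousOn_smul hφ.continuous.continuousOn
  · exact (hφ''_cont.continuousOn.smul (h.continuousOn_uIcc hab)).intervalIntegrable

theorem sq_smul_eq_integral {k : ℝ} (h : SLSol q ((k ^ 2 : ℝ) : ℂ) y y' s)
    (hab : uIcc a b ⊆ s) :
    (b - a) ^ 2 • y a =
      ∫ t in a..b, (cutoffSine k a b t • (q t * y t) - cutoffResidual k a b t • y t) := by
  have hgreen := h.integral_smul_sub_deriv_deriv_smul hab (contDiff_cutoffSine k a b)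
  have hφa : cutoffSine k a b a = 0 := by simp [cutoffSine, sineSolution_zero]
  have hφb : cutoffSine k a b b = 0 := by simp [cutoffSine]
  have hφ'a : deriv (cutoffSine k a b) a = (b - a) ^ 2 := by
    simp [deriv_cutoffSine, sineSolution_zero]
  have hφ'b : deriv (cutoffSine k a b) b = 0 := by simp [deriv_cutoffSine]
  simp only [hφa, hφb, hφ'a, hφ'b, zero_smul, sub_zero, zero_sub, neg_neg,
    deriv_deriv_cutoffSine] at hgreen
  rw [← hgreen]
  refine intervalIntegral.integral_congr fun t _ => ?_
  simp only [Complex.real_smul]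
  push_cast
  ring

theorem mul_norm_le_integral {k : ℝ} (h : SLSol q ((k ^ 2 : ℝ) : ℂ) y y' s) (hle : a ≤ b)
    (hab : Icc a b ⊆ s) :
    (b - a) * ‖y a‖ ≤ (4 * ∫ t in a..b, ‖y t‖) +
      ∫ t in a..b, (t - a) * ‖q t‖ * ((b - t) * ‖y t‖) := by
  rw [← uIcc_of_le hle] at hab
  obtain rfl | hlt := hle.eq_or_lt
  · simp
  have hba : 0 < b - a := sub_pos.2 hlt
  have hy_int : IntervalIntegrable (fun t => 4 * ‖y t‖) volume a b :=
    (continuousOn_const.mul (h.continuousOn_uIcc hab).norm).intervalIntegrable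
  have hqy_int : IntervalIntegrable
      (fun t => (t - a) * ‖q t‖ * ((b - t) * ‖y t‖)) volume a b :=
    h.intervalIntegrable_mul_norm_potential_mul hab (by fun_prop) (by fun_prop)
  have hintegrand : ∀ t ∈ Icc a b,
      ‖cutoffSine k a b t • (q t * y t) - cutoffResidual k a b t • y t‖ ≤
        (b - a) * (4 * ‖y t‖ + (t - a) * ‖q t‖ * ((b - t) * ‖y t‖)) := fun t ht => by
    calc ‖cutoffSine k a b t • (q t * y t) - cutoffResidual k a b t • y t‖
        ≤ |cutoffSine k a b t| * (‖q t‖ * ‖y t‖) + |cutoffResidual k a b t| * ‖y t‖ := by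
          refine (norm_sub_le _ _).trans_eq ?_
          simp only [norm_smul, norm_mul, Real.norm_eq_abs]
      _ ≤ (b - a) * ((t - a) * (b - t)) * (‖q t‖ * ‖y t‖) + 4 * (b - a) * ‖y t‖ := by
          gcongr
          · exact abs_cutoffSine_le ht
          · exact abs_cutoffResidual_le ht
      _ = (b - a) * (4 * ‖y t‖ + (t - a) * ‖q t‖ * ((b - t) * ‖y t‖)) := by ring
  have hsq : (b - a) * ((b - a) * ‖y a‖) ≤
      (b - a) * ∫ t in a..b, (4 * ‖y t‖ + (t - a) * ‖q t‖ * ((b - t) * ‖y t‖)) := by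
    calc (b - a) * ((b - a) * ‖y a‖) = ‖(b - a) ^ 2 • y a‖ := by
          rw [norm_smul, Real.norm_of_nonneg (sq_nonneg _)]; ring
      _ ≤ ∫ t in a..b, (b - a) * (4 * ‖y t‖ + (t - a) * ‖q t‖ * ((b - t) * ‖y t‖)) := by
          rw [h.sq_smul_eq_integral hab]
          exact intervalIntegral.norm_integral_le_of_norm_le hle
            (ae_of_all _ fun t ht => hintegrand t (Ioc_subset_Icc_self ht))
            ((hy_int.add hqy_int).const_mul _)
      _ = _ := intervalIntegral.integral_const_mul _ _
  rw [← intervalIntegral.integral_const_mul, ← intervalIntegral.integral_add hy_int hqy_int]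
  exact le_of_mul_le_mul_left hsq hba

theorem mul_norm_le_add_integral_moment {k : ℝ} (h : SLSol q ((k ^ 2 : ℝ) : ℂ) y y' (Ici 0))
    (ha : 0 ≤ a) (hab : a ≤ b) :
    (b - a) * ‖y a‖ ≤ (4 * ∫ t in (0 : ℝ)..b, ‖y t‖) +
      ∫ t in a..b, t * ‖q t‖ * ((b - t) * ‖y t‖) := by
  have hsub : Icc a b ⊆ Ici 0 := fun t ht => ha.trans ht.1
  have hsub' : uIcc a b ⊆ Ici 0 := uIcc_of_le hab ▸ hsub
  have hsub_zero : uIcc 0 b ⊆ Ici 0 := uIcc_of_le (ha.trans hab) ▸ Icc_subset_Ici_self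
  refine (h.mul_norm_le_integral hab hsub).trans (add_le_add ?_ ?_)
  · gcongr
    exact intervalIntegral.integral_mono_interval ha hab le_rfl
      (ae_of_all _ fun t => norm_nonneg _) (h.continuousOn_uIcc hsub_zero).norm.intervalIntegrable
  · refine intervalIntegral.integral_mono_on hab
      (h.intervalIntegrable_mul_norm_potential_mul hsub' (by fun_prop) (by fun_prop))
      (h.intervalIntegrable_mul_norm_potential_mul hsub' (by fun_prop) (by fun_prop))
      fun t ht => ?_
    have hbt : 0 ≤ b - t := sub_nonneg.2 ht.2
    gcongr
    linarith

theorem mul_norm_le_mul_exp {k : ℝ} (h : SLSol q ((k ^ 2 : ℝ) : ℂ) y y' (Ici 0))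
    (hq : IntegrableOn (fun x => x * ‖q x‖) (Ici 0)) (ha : 0 ≤ a) (hab : a ≤ b) :
    (b - a) * ‖y a‖ ≤
      (4 * ∫ t in (0 : ℝ)..b, ‖y t‖) * Real.exp (∫ t in Ici (0 : ℝ), t * ‖q t‖) := by
  have hsub : Icc a b ⊆ Ici 0 := fun t ht => ha.trans ht.1
  have hmoment_nonneg : ∀ t ∈ Ici (0 : ℝ), 0 ≤ t * ‖q t‖ := fun t ht =>
    mul_nonneg ht (norm_nonneg _)
  have hmoment_int : IntervalIntegrable (fun t => t * ‖q t‖) volume a b :=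
    (intervalIntegrable_iff_integrableOn_Icc_of_le hab).2 (hq.mono_set hsub)
  have hgronwall := le_mul_exp_integral_of_le_add_integral (f := fun x => (b - x) * ‖y x‖) hab
    hmoment_int (fun t ht => hmoment_nonneg t (hsub ht))
    (h.intervalIntegrable_mul_norm_potential_mul (uIcc_of_le hab ▸ hsub) (by fun_prop)
      (by fun_prop))
    fun x hx => h.mul_norm_le_add_integral_moment (hsub hx) hx.2
  refine hgronwall.trans ?_
  gcongr
  · exact mul_nonneg zero_le_four
      (intervalIntegral.integral_nonneg (ha.trans hab) fun t _ => norm_nonneg _)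
  · rw [intervalIntegral.integral_of_le hab]
    exact setIntegral_mono_set hq
      ((ae_restrict_iff' measurableSet_Ici).2 (ae_of_all _ hmoment_nonneg))
      (LE.le.eventuallyLE fun t ht => ha.trans ht.1.le)

theorem memLp_two (h : SLSol q lam y y' (Ici a))
    (hL2 : IntegrableOn (fun x => ‖y x‖ ^ 2) (Ici a)) :
    MemLp y 2 (volume.restrict (Ici a)) :=
  (memLp_two_iff_integrable_sq_norm
    (h.continuousOn_Ici.aestronglyMeasurable measurableSet_Ici)).2 hL2

end SLSol

theorem statement8_general {q y y' : ℝ → ℂ} {lam : ℝ}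
    (hq : IntegrableOn (fun x => x * ‖q x‖) (Ici 0)) (hlam : 0 ≤ lam)
    (hy : SLSol q lam y y' (Ici 0))
    (hmean : Tendsto (fun b => (∫ t in (0 : ℝ)..b, ‖y t‖) / b) atTop (𝓝 0)) :
    ∀ x ∈ Ici (0 : ℝ), y x = 0 := by
  intro a ha
  obtain ⟨k, rfl⟩ : ∃ k : ℝ, k ^ 2 = lam := ⟨√lam, Real.sq_sqrt hlam⟩
  set M := Real.exp (∫ t in Ici (0 : ℝ), t * ‖q t‖)
  have hbound : ∀ᶠ b in atTop,
      (1 - a * b⁻¹) * ‖y a‖ ≤ 4 * M * ((∫ t in (0 : ℝ)..b, ‖y t‖) / b) := by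
    filter_upwards [eventually_ge_atTop a, eventually_gt_atTop 0] with b hab hb
    have hle := div_le_div_of_nonneg_right (hy.mul_norm_le_mul_exp hq ha hab) hb.le
    calc (1 - a * b⁻¹) * ‖y a‖ = (b - a) * ‖y a‖ / b := by field_simp
      _ ≤ _ := hle
      _ = 4 * M * ((∫ t in (0 : ℝ)..b, ‖y t‖) / b) := by ring
  have hleft : Tendsto (fun b : ℝ => (1 - a * b⁻¹) * ‖y a‖) atTop (𝓝 ‖y a‖) := by
    simpa using ((tendsto_inv_atTop_zero.const_mul a).const_sub 1).mul_const ‖y a‖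
  have hright := hmean.const_mul (4 * M)
  rw [mul_zero] at hright
  exact norm_le_zero_iff.1 (le_of_tendsto_of_tendsto hleft hright hbound)

end

/-- for real `λ ≥ 0` and `∫₀^∞(1+x)|q(x)|dx < ∞`, any
square-integrable solution of `-y'' + q y = λ y` on `[0,∞)` vanishes
identically. -/
theorem statement8
    (q : ℝ → ℝ) (hmeas : Measurable q)
    (hq : IntegrableOn (fun x => (1 + x) * |q x|) (Ici 0))
    (lam : ℝ) (hlam : 0 ≤ lam)
    (y y' : ℝ → ℂ)
    (hy : SLSol (fun x => (q x : ℂ)) (lam : ℂ) y y' (Ici 0))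
    (hL2 : IntegrableOn (fun x => ‖y x‖ ^ 2) (Ici 0)) :
    ∀ x ∈ Ici (0:ℝ), y x = 0 :=
  statement8_general (integrableOn_mul_of_one_add_mul (by simpa using hq)) hlam hy
    (tendsto_integral_norm_div_of_memLp one_le_two ENNReal.ofNat_ne_top (hy.memLp_two hL2))
end
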